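/- Let n ≥ 2 and 1 < m < n. There exists a constant C > 0 such that for all ζ ∈ ℂ∖ℝ and all Schwartz functions f, g on ℝⁿ, |( ⟨D_x⟩^{m-1} (ζ − p(D_x))^{-1} f , g )_{L²(ℝⁿ)}| ≤ C ‖⟨x⟩^{m/2} f‖_{L²(ℝⁿ)} ‖⟨x⟩^{m/2} g‖_{L²(ℝⁿ)}; in particular the supremum over ζ ∈ ℂ∖ℝ of the left-hand side is finite and bounded by the right-hand side. -/

import Mathlib

open MeasureTheory Real Complex RealInnerProductSpace

noncomputable section

/-- Fourier transform with convention `(2π)^(-n/2) ∫ e^(-ix·ξ) f(x) dx`. -/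
def FT (n : ℕ) (f : EuclideanSpace ℝ (Fin n) → ℂ) (ξ : EuclideanSpace ℝ (Fin n)) : ℂ :=
  ((2 * π) ^ (-(n : ℝ) / 2) : ℝ) •
    ∫ x : EuclideanSpace ℝ (Fin n), Complex.exp (-Complex.I * ((⟪x, ξ⟫ : ℝ) : ℂ)) * f x

/-- Inverse Fourier transform. -/
def IFT (n : ℕ) (F : EuclideanSpace ℝ (Fin n) → ℂ) (x : EuclideanSpace ℝ (Fin n)) : ℂ :=
  ((2 * π) ^ (-(n : ℝ) / 2) : ℝ) •
    ∫ ξ : EuclideanSpace ℝ (Fin n), Complex.exp (Complex.I * ((⟪x, ξ⟫ : ℝ) : ℂ)) * F ξ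

/-- Fourier multiplier with symbol `q`: `q(D_x) f = IFT (q · FT f)`. -/
def mult (n : ℕ) (q : EuclideanSpace ℝ (Fin n) → ℂ) (f : EuclideanSpace ℝ (Fin n) → ℂ) :
    EuclideanSpace ℝ (Fin n) → ℂ :=
  IFT n fun ξ => q ξ * FT n f ξ

open Set Filter Metric Topology
open scoped FourierTransform ENNReal NNReal ComplexConjugate

/-!
Along a ray `ξ = (s t ^ (1 / m) / a θ) θ`, with `s ^ m = Re ζ`, the resolvent becomes the Cauchy
kernel `(s ^ m)⁻¹ (ζ / s ^ m - t)⁻¹`. Off the real axis this kernel is the Fourier transform of a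
bounded exponential on a half-line, so its integral against a product of two functions of `t` is
bounded, uniformly in `ζ`, by the product of the `L¹` norms of their Fourier transforms, hence by
their `H¹` energies. A derivative of `FT f` costs `μ / s` when `f` is supported in `‖x‖ ≤ μ / s`,
so after a dyadic decomposition of `f` and `g` in `‖x‖` the energies along rays integrate to
weighted `L²` norms, and the weights `⟨x⟩ ^ (m / 2)` make the double sum geometric because `m > 1`.
Away from `p = Re ζ` the multiplier is at most a constant times `1 + ‖ξ‖ ^ (-m)`, which the Fourier
transform side of Hardy's inequality controls by the weights because `m < n`.
-/

section CauchySchwarz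

variable {α : Type*} [MeasurableSpace α] {μ : Measure α} {A B : α → ℝ}

theorem memLp_two_sqrt (hA : Integrable A μ) (hA0 : ∀ x, 0 ≤ A x) :
    MemLp (fun x => √(A x)) 2 μ := by
  rw [memLp_two_iff_integrable_sq (continuous_sqrt.comp_aestronglyMeasurable hA.1)]
  simpa only [Real.sq_sqrt (hA0 _)] using hA

theorem integrable_sqrt_mul_sqrt (hA : Integrable A μ) (hB : Integrable B μ)
    (hA0 : ∀ x, 0 ≤ A x) (hB0 : ∀ x, 0 ≤ B x) : Integrable (fun x => √(A x) * √(B x)) μ :=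
  (memLp_two_sqrt hA hA0).integrable_mul (memLp_two_sqrt hB hB0)

theorem integral_sqrt_mul_sqrt_le (hA : Integrable A μ) (hB : Integrable B μ)
    (hA0 : ∀ x, 0 ≤ A x) (hB0 : ∀ x, 0 ≤ B x) :
    ∫ x, √(A x) * √(B x) ∂μ ≤ √(∫ x, A x ∂μ) * √(∫ x, B x ∂μ) := by
  have h := integral_mul_le_Lp_mul_Lq_of_nonneg Real.HolderConjugate.two_two
    (ae_of_all μ fun x => Real.sqrt_nonneg (A x)) (ae_of_all μ fun x => Real.sqrt_nonneg (B x))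
    (by simpa using memLp_two_sqrt hA hA0) (by simpa using memLp_two_sqrt hB hB0)
  simpa only [Real.rpow_two, Real.sq_sqrt (hA0 _), Real.sq_sqrt (hB0 _), ← Real.sqrt_eq_rpow]
    using h

theorem norm_integral_le_of_norm_le_sqrt_mul_sqrt {E : Type*} [NormedAddCommGroup E]
    [NormedSpace ℝ E] {F : α → E} {K : ℝ} (hA : Integrable A μ) (hB : Integrable B μ)
    (hA0 : ∀ x, 0 ≤ A x) (hB0 : ∀ x, 0 ≤ B x) (hK : 0 ≤ K)
    (hF : ∀ᵐ x ∂μ, ‖F x‖ ≤ K * (√(A x) * √(B x))) :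
    ‖∫ x, F x ∂μ‖ ≤ K * (√(∫ x, A x ∂μ) * √(∫ x, B x ∂μ)) :=
  calc ‖∫ x, F x ∂μ‖ ≤ ∫ x, K * (√(A x) * √(B x)) ∂μ :=
        norm_integral_le_of_norm_le ((integrable_sqrt_mul_sqrt hA hB hA0 hB0).const_mul K) hF
    _ ≤ K * (√(∫ x, A x ∂μ) * √(∫ x, B x ∂μ)) := by
        rw [integral_const_mul]
        gcongr
        exact integral_sqrt_mul_sqrt_le hA hB hA0 hB0

end CauchySchwarz

theorem integrable_conj {α : Type*} [MeasurableSpace α] {μ : Measure α} {f : α → ℂ}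
    (hf : Integrable f μ) : Integrable (fun x => conj (f x)) μ :=
  conjCLE.integrable_comp_iff.2 hf

section Plancherel

variable {V : Type*} [NormedAddCommGroup V] [InnerProductSpace ℝ V] [FiniteDimensional ℝ V]
  [MeasurableSpace V] [BorelSpace V] {f g : V → ℂ}

theorem continuous_fourier_of_integrable (hf : Integrable f) : Continuous (𝓕 f) :=
  VectorFourier.fourierIntegral_continuous continuous_fourierChar (by exact continuous_inner) hf

theorem integral_fourier_mul_eq (hf : Integrable f) (hg : Integrable g) :
    ∫ x, 𝓕 f x * g x = ∫ x, f x * 𝓕 g x := by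
  have h := VectorFourier.integral_fourierIntegral_smul_eq_flip (L := innerₗ V) (μ := volume)
    (ν := volume) continuous_fourierChar (by exact continuous_inner) hf hg
  rwa [flip_innerₗ] at h

theorem fourier_ae_eq_fourier_toLp (hf : Integrable f) (hf2 : MemLp f 2) :
    𝓕 f =ᵐ[volume] (𝓕 hf2.toLp : Lp ℂ 2 (volume : Measure V)) := by
  refine ae_eq_of_integral_contDiff_smul_eq
    (continuous_fourier_of_integrable hf).locallyIntegrable
    ((Lp.memLp (𝓕 hf2.toLp)).locallyIntegrable one_le_two) fun φ hφ hφs => ?_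
  have hφs' : HasCompactSupport fun x => (φ x : ℂ) := hφs.comp_left (g := Complex.ofReal) rfl
  let Φ : SchwartzMap V ℂ := hφs'.toSchwartzMap (ofRealCLM.contDiff.comp hφ)
  calc ∫ x, φ x • 𝓕 f x = ∫ x, 𝓕 (Φ : V → ℂ) x * f x :=
        (integral_fourier_mul_eq Φ.integrable hf).symm
    _ = ∫ x, (𝓕 Φ) x • hf2.toLp f x := by
        refine integral_congr_ae ?_
        filter_upwards [hf2.coeFn_toLp] with x hx
        rw [hx]
        rfl
    _ = Lp.toTemperedDistribution (𝓕 (hf2.toLp f)) Φ := by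
        rw [← Lp.fourier_toTemperedDistribution_eq, TemperedDistribution.fourier_apply,
          Lp.toTemperedDistribution_apply]
    _ = ∫ x, φ x • (𝓕 (hf2.toLp f) : Lp ℂ 2 (volume : Measure V)) x := by
        rw [Lp.toTemperedDistribution_apply]
        rfl

theorem eLpNorm_two_fourier_eq (hf : Integrable f) (hf2 : MemLp f 2) :
    eLpNorm (𝓕 f) 2 = eLpNorm f 2 := by
  rw [eLpNorm_congr_ae (fourier_ae_eq_fourier_toLp hf hf2), ← eLpNorm_congr_ae hf2.coeFn_toLp,
    ← Lp.enorm_def, ← Lp.enorm_def, ← ofReal_norm, ← ofReal_norm, Lp.norm_fourier_eq]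

theorem eLpNorm_two_sq {α : Type*} [MeasurableSpace α] {μ : Measure α} (f : α → ℂ) :
    eLpNorm f 2 μ ^ 2 = ∫⁻ x, ‖f x‖ₑ ^ 2 ∂μ := by
  rw [eLpNorm_eq_lintegral_rpow_enorm_toReal two_ne_zero ENNReal.ofNat_ne_top,
    ← ENNReal.rpow_natCast, ← ENNReal.rpow_mul]
  norm_num

theorem integral_norm_sq_eq_toReal_eLpNorm_sq {α : Type*} [MeasurableSpace α] {μ : Measure α}
    {f : α → ℂ} (hf : AEStronglyMeasurable f μ) :
    ∫ x, ‖f x‖ ^ 2 ∂μ = (eLpNorm f 2 μ).toReal ^ 2 := by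
  rw [← ENNReal.toReal_pow, eLpNorm_two_sq,
    integral_eq_lintegral_of_nonneg_ae (ae_of_all μ fun x => sq_nonneg _) (hf.norm.pow 2)]
  simp only [ENNReal.ofReal_pow (norm_nonneg _), ofReal_norm]

theorem memLp_two_fourier (hf : Integrable f) (hf2 : MemLp f 2) : MemLp (𝓕 f) 2 :=
  ⟨(continuous_fourier_of_integrable hf).aestronglyMeasurable,
    (eLpNorm_two_fourier_eq hf hf2).trans_lt hf2.2⟩

theorem integral_norm_sq_fourier_eq (hf : Integrable f) (hf2 : MemLp f 2) :
    ∫ ξ, ‖𝓕 f ξ‖ ^ 2 = ∫ x, ‖f x‖ ^ 2 := by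
  rw [integral_norm_sq_eq_toReal_eLpNorm_sq hf.1, ← eLpNorm_two_fourier_eq hf hf2,
    integral_norm_sq_eq_toReal_eLpNorm_sq (memLp_two_fourier hf hf2).1]

end Plancherel

section OneDimensional

theorem integral_inv_add_mul_sq {μ : ℝ} (hμ : 0 < μ) :
    Integrable (fun x : ℝ => (μ + μ⁻¹ * (2 * π * x) ^ 2)⁻¹) ∧
      ∫ x : ℝ, (μ + μ⁻¹ * (2 * π * x) ^ 2)⁻¹ = 1 / 2 := by
  have hc : 2 * π / μ ≠ 0 := by positivity
  have hrescale : (fun x : ℝ => (μ + μ⁻¹ * (2 * π * x) ^ 2)⁻¹)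
      = fun x => μ⁻¹ * (1 + (2 * π / μ * x) ^ 2)⁻¹ := by
    ext x
    rw [← mul_inv]
    congr 1
    field_simp
  rw [hrescale]
  refine ⟨(integrable_inv_one_add_sq.comp_mul_left' hc).const_mul _, ?_⟩
  rw [integral_const_mul, Measure.integral_comp_mul_left (fun x : ℝ => (1 + x ^ 2)⁻¹),
    integral_univ_inv_one_add_sq, abs_of_pos (by positivity), smul_eq_mul]
  field_simp

/-- The `H¹` energy of `u` on `I` at frequency scale `μ`. -/
def energy (I : Set ℝ) (μ : ℝ) (u : ℝ → ℂ) : ℝ :=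
  ∫ t in I, (μ * ‖u t‖ ^ 2 + μ⁻¹ * ‖deriv u t‖ ^ 2)

variable {u v h : ℝ → ℂ} {μ ν : ℝ}

theorem integral_weighted_norm_sq_fourier_eq (hu : ContDiff ℝ 1 u) (hus : HasCompactSupport u)
    (μ : ℝ) :
    Integrable (fun x => (μ + μ⁻¹ * (2 * π * x) ^ 2) * ‖𝓕 u x‖ ^ 2) ∧
      ∫ x, (μ + μ⁻¹ * (2 * π * x) ^ 2) * ‖𝓕 u x‖ ^ 2 = energy univ μ u := by
  have hdu := hu.continuous_deriv le_rfl
  have hu1 := hu.continuous.integrable_of_hasCompactSupport hus (μ := volume)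
  have hu2 : MemLp u 2 := hu.continuous.memLp_of_hasCompactSupport hus
  have hdu1 := hdu.integrable_of_hasCompactSupport hus.deriv (μ := volume)
  have hdu2 : MemLp (deriv u) 2 := hdu.memLp_of_hasCompactSupport hus.deriv
  have hsq : ∀ {w : ℝ → ℂ}, MemLp w 2 → Integrable fun t => ‖w t‖ ^ 2 := fun hw =>
    (memLp_two_iff_integrable_sq_norm hw.1).1 hw
  have hpointwise : ∀ x, (μ + μ⁻¹ * (2 * π * x) ^ 2) * ‖𝓕 u x‖ ^ 2
      = μ * ‖𝓕 u x‖ ^ 2 + μ⁻¹ * ‖𝓕 (deriv u) x‖ ^ 2 := fun x => by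
    rw [Real.fourier_deriv hu1 (hu.differentiable one_ne_zero) hdu1, norm_smul, mul_pow,
      add_mul, mul_assoc]
    simp [mul_pow]
  have hint := (hsq (memLp_two_fourier hu1 hu2)).const_mul μ
  have hint' := (hsq (memLp_two_fourier hdu1 hdu2)).const_mul μ⁻¹
  simp only [hpointwise]
  refine ⟨hint.add hint', ?_⟩
  rw [energy, Measure.restrict_univ, integral_add hint hint',
    integral_add ((hsq hu2).const_mul μ) ((hsq hdu2).const_mul μ⁻¹),
    integral_const_mul, integral_const_mul, integral_const_mul, integral_const_mul,
    integral_norm_sq_fourier_eq hu1 hu2, integral_norm_sq_fourier_eq hdu1 hdu2]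

theorem integrable_fourier_of_contDiff (hu : ContDiff ℝ 1 u) (hus : HasCompactSupport u)
    (hμ : 0 < μ) : Integrable (𝓕 u) ∧ ∫ x, ‖𝓕 u x‖ ≤ √(energy univ μ u) := by
  obtain ⟨hk, hkint⟩ := integral_inv_add_mul_sq hμ
  obtain ⟨hE, hEint⟩ := integral_weighted_norm_sq_fourier_eq hu hus μ
  have hk0 : ∀ x : ℝ, 0 < μ + μ⁻¹ * (2 * π * x) ^ 2 := fun x => by positivity
  have hfactor : (fun x => ‖𝓕 u x‖) = fun x => √((μ + μ⁻¹ * (2 * π * x) ^ 2)⁻¹) *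
      √((μ + μ⁻¹ * (2 * π * x) ^ 2) * ‖𝓕 u x‖ ^ 2) := by
    ext x
    rw [← Real.sqrt_mul (by have := hk0 x; positivity), inv_mul_cancel_left₀ (hk0 x).ne',
      Real.sqrt_sq (norm_nonneg _)]
  have hk0_inv : ∀ x : ℝ, 0 ≤ (μ + μ⁻¹ * (2 * π * x) ^ 2)⁻¹ := fun x => (inv_pos.2 (hk0 x)).le
  have hE0 : ∀ x : ℝ, 0 ≤ (μ + μ⁻¹ * (2 * π * x) ^ 2) * ‖𝓕 u x‖ ^ 2 := fun x =>
    mul_nonneg (hk0 x).le (sq_nonneg _)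
  have hu1 := hu.continuous.integrable_of_hasCompactSupport hus (μ := volume)
  refine ⟨(integrable_norm_iff
    (continuous_fourier_of_integrable hu1).aestronglyMeasurable).1 ?_, ?_⟩
  · exact hfactor ▸ integrable_sqrt_mul_sqrt hk hE hk0_inv hE0
  · calc ∫ x, ‖𝓕 u x‖ ≤ √(1 / 2) * √(energy univ μ u) := by
          rw [hfactor, ← hkint, ← hEint]
          exact integral_sqrt_mul_sqrt_le hk hE hk0_inv hE0
      _ ≤ √(energy univ μ u) :=
          mul_le_of_le_one_left (Real.sqrt_nonneg _) (Real.sqrt_le_one.2 (by norm_num))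

theorem fourier_indicator_Ioi_exp {z : ℂ} (hz : 0 < z.im) (t : ℝ) :
    𝓕 ((Ioi (0 : ℝ)).indicator fun x : ℝ => Complex.exp (2 * π * I * z * x)) t
      = -(2 * π * I)⁻¹ * (z - t)⁻¹ := by
  have hre : (2 * π * I * (z - t)).re < 0 := by
    have : (2 * π * I * (z - t)).re = -(2 * π * z.im) := by simp
    rw [this]
    exact neg_neg_of_pos (by positivity)
  calc _ = ∫ x in Ioi (0 : ℝ), Complex.exp (2 * π * I * (z - t) * x) := by
        rw [Real.fourier_real_eq_integral_exp_smul, ← integral_indicator measurableSet_Ioi]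
        congr 1
        ext x
        by_cases hx : x ∈ Ioi (0 : ℝ)
        · rw [indicator_of_mem hx, indicator_of_mem hx, smul_eq_mul, ← Complex.exp_add]
          congr 1
          push_cast
          ring
        · simp [indicator_of_notMem hx]
    _ = -(2 * π * I)⁻¹ * (z - t)⁻¹ := by
        rw [integral_exp_mul_complex_Ioi hre]
        simp [div_eq_mul_inv]
        ring

theorem norm_integral_resolvent_mul_le_of_im_pos {z : ℂ} (hz : 0 < z.im) (hh : Integrable h)
    (hh' : Integrable (𝓕 h)) :
    ‖∫ t : ℝ, (z - t)⁻¹ * h t‖ ≤ 2 * π * ∫ x, ‖𝓕 h x‖ := by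
  set k : ℝ → ℂ := (Ioi (0 : ℝ)).indicator fun x : ℝ => Complex.exp (2 * π * I * z * x)
  have hre : (2 * π * I * z).re < 0 := by
    have : (2 * π * I * z).re = -(2 * π * z.im) := by simp
    rw [this]
    exact neg_neg_of_pos (by positivity)
  have hk : Integrable k :=
    (integrable_indicator_iff measurableSet_Ioi).2 (integrableOn_exp_mul_complex_Ioi hre 0)
  have hk1 : ∀ x, ‖k x‖ ≤ 1 := fun x => by
    by_cases hx : x ∈ Ioi (0 : ℝ)
    · simp only [k, indicator_of_mem hx]
      rw [Complex.norm_exp, Real.exp_le_one_iff, re_mul_ofReal]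
      exact mul_nonpos_of_nonpos_of_nonneg hre.le (le_of_lt hx)
    · simp [k, indicator_of_notMem hx]
  calc ‖∫ t : ℝ, (z - t)⁻¹ * h t‖ = ‖-(2 * π * I) * ∫ t, 𝓕 k t * h t‖ := by
        simp_rw [k, fourier_indicator_Ioi_exp hz, mul_assoc (-(2 * π * I)⁻¹), integral_const_mul]
        rw [← mul_assoc, neg_mul_neg, mul_inv_cancel₀ two_pi_I_ne_zero, one_mul]
    _ = 2 * π * ‖∫ t, k t * 𝓕 h t‖ := by
        rw [integral_fourier_mul_eq hk hh, norm_mul]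
        simp [abs_of_pos pi_pos]
    _ ≤ 2 * π * ∫ x, ‖𝓕 h x‖ := by
        gcongr
        refine norm_integral_le_of_norm_le hh'.norm (ae_of_all _ fun x => ?_)
        rw [norm_mul]
        exact mul_le_of_le_one_left (norm_nonneg _) (hk1 x)

theorem norm_integral_resolvent_mul_le {z : ℂ} (hz : z.im ≠ 0) (hh : Integrable h)
    (hh' : Integrable (𝓕 h)) :
    ‖∫ t : ℝ, (z - t)⁻¹ * h t‖ ≤ 2 * π * ∫ x, ‖𝓕 h x‖ := by
  rcases hz.lt_or_gt with hz | hz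
  · have hF : 𝓕 (fun t => h (-t)) = fun x => 𝓕 h (-x) := by
      rw [← Real.fourierInv_eq_fourier_comp_neg]
      exact funext (Real.fourierInv_eq_fourier_neg h)
    have hbound := norm_integral_resolvent_mul_le_of_im_pos (z := -z) (h := fun t => h (-t))
      (by simpa using hz) hh.comp_neg (hF ▸ hh'.comp_neg)
    rw [hF, integral_neg_eq_self fun x => ‖𝓕 h x‖] at hbound
    rw [← integral_neg_eq_self (fun t : ℝ => (z - t)⁻¹ * h t), ← norm_neg, ← integral_neg]
    have hreflect : ∀ t : ℝ, -((z - (-t : ℝ))⁻¹ * h (-t)) = (-z - t)⁻¹ * h (-t) := fun t => by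
      rw [← neg_mul, ← inv_neg]
      push_cast
      ring_nf
    simpa only [hreflect] using hbound
  · exact norm_integral_resolvent_mul_le_of_im_pos hz hh hh'

theorem fourier_exp_mul (u : ℝ → ℂ) (η x : ℝ) :
    𝓕 (fun t : ℝ => Complex.exp (-(2 * π * η * t) * I) * u t) x = 𝓕 u (x + η) := by
  simp only [Real.fourier_real_eq_integral_exp_smul, smul_eq_mul, ← mul_assoc,
    ← Complex.exp_add]
  congr 1
  ext t
  congr 2
  push_cast
  ring

theorem fourier_conj (u : ℝ → ℂ) (t : ℝ) : 𝓕 (fun x => conj (u x)) t = conj (𝓕⁻ u t) := by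
  rw [Real.fourier_eq', Real.fourierInv_eq', ← integral_conj]
  congr 1
  ext x
  simp [← Complex.exp_conj, Complex.conj_ofNat]

theorem norm_fourier_resolvent_mul_le {z : ℂ} (hz : z.im ≠ 0) (hu : Integrable u)
    (hu' : Integrable (𝓕 u)) (η : ℝ) :
    ‖𝓕 (fun t : ℝ => (z - t)⁻¹ * u t) η‖ ≤ 2 * π * ∫ x, ‖𝓕 u x‖ := by
  have hmod := fourier_exp_mul u η
  have hbound := norm_integral_resolvent_mul_le hz
    (h := fun t : ℝ => Complex.exp (-(2 * π * η * t) * I) * u t)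
    (hu.bdd_mul (c := 1) (by fun_prop) (ae_of_all _ fun t => by simp [Complex.norm_exp]))
    ((funext hmod : 𝓕 _ = _) ▸ hu'.comp_add_right η)
  simp only [hmod, integral_add_right_eq_self fun x => ‖𝓕 u x‖] at hbound
  convert hbound using 3
  rw [Real.fourier_real_eq_integral_exp_smul]
  refine integral_congr_ae (ae_of_all _ fun t => ?_)
  simp only [smul_eq_mul]
  rw [mul_left_comm]
  congr 3
  push_cast
  ring

/-- Expanding `v` by Fourier inversion, each frequency of `v` merely translates the Fourier
transform of `u`. -/
theorem norm_integral_resolvent_mul_conj_le {z : ℂ} (hz : z.im ≠ 0) (hu : ContDiff ℝ 1 u)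
    (hus : HasCompactSupport u) (hv : ContDiff ℝ 1 v) (hvs : HasCompactSupport v) (hμ : 0 < μ)
    (hν : 0 < ν) :
    ‖∫ t : ℝ, (z - t)⁻¹ * (u t * conj (v t))‖ ≤
      2 * π * (√(energy univ μ u) * √(energy univ ν v)) := by
  obtain ⟨hFu, hFuE⟩ := integrable_fourier_of_contDiff hu hus hμ
  obtain ⟨hFv, hFvE⟩ := integrable_fourier_of_contDiff hv hvs hν
  have hu1 := hu.continuous.integrable_of_hasCompactSupport hus (μ := volume)
  have hv1 := hv.continuous.integrable_of_hasCompactSupport hvs (μ := volume)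
  have hne (t : ℝ) : z - t ≠ 0 := fun h => hz (by simpa using congrArg im h)
  have hk : Integrable fun t : ℝ => (z - t)⁻¹ * u t :=
    ((Continuous.inv₀ (by fun_prop) hne).mul hu.continuous).integrable_of_hasCompactSupport
      hus.mul_left
  have hinversion (t : ℝ) : conj (v t) = 𝓕 (fun η => conj (𝓕 v η)) t := by
    rw [fourier_conj, hv1.fourierInv_fourier_eq hFv hv.continuous.continuousAt]
  calc ‖∫ t : ℝ, (z - t)⁻¹ * (u t * conj (v t))‖
      = ‖∫ η, 𝓕 (fun t : ℝ => (z - t)⁻¹ * u t) η * conj (𝓕 v η)‖ := by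
        simp_rw [← mul_assoc, hinversion]
        rw [integral_fourier_mul_eq hk (integrable_conj hFv)]
    _ ≤ ∫ η, (2 * π * ∫ x, ‖𝓕 u x‖) * ‖𝓕 v η‖ := by
        refine norm_integral_le_of_norm_le (hFv.norm.const_mul _) (ae_of_all _ fun η => ?_)
        rw [norm_mul, RCLike.norm_conj]
        gcongr
        exact norm_fourier_resolvent_mul_le hz hu1 hFu η
    _ ≤ 2 * π * (√(energy univ μ u) * √(energy univ ν v)) := by
        rw [integral_const_mul, mul_assoc]
        gcongr

end OneDimensional

section FourierTransform

variable {n : ℕ} {f g : EuclideanSpace ℝ (Fin n) → ℂ}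

theorem FT_eq_fourier (f : EuclideanSpace ℝ (Fin n) → ℂ) :
    FT n f = fun ξ => ((2 * π) ^ (-(n : ℝ) / 2) : ℝ) • 𝓕 f ((2 * π)⁻¹ • ξ) := by
  ext ξ
  rw [FT, Real.fourier_eq']
  congr 2
  ext x
  rw [smul_eq_mul, inner_smul_right]
  congr 2
  push_cast
  field_simp

theorem norm_exp_neg_I_mul_inner (x ξ : EuclideanSpace ℝ (Fin n)) :
    ‖Complex.exp (-I * ((⟪x, ξ⟫ : ℝ) : ℂ))‖ = 1 := by
  simp [Complex.norm_exp]

theorem integrable_exp_mul (hf : Integrable f) (ξ : EuclideanSpace ℝ (Fin n)) :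
    Integrable fun x => Complex.exp (-I * ((⟪x, ξ⟫ : ℝ) : ℂ)) * f x :=
  hf.bdd_mul (c := 1) (by fun_prop) (ae_of_all _ fun x => (norm_exp_neg_I_mul_inner x ξ).le)

theorem two_pi_rpow_le_one : (2 * π) ^ (-(n : ℝ) / 2) ≤ 1 := by
  refine Real.rpow_le_one_of_one_le_of_nonpos (by linarith [Real.pi_gt_three]) ?_
  linarith [n.cast_nonneg (α := ℝ)]

theorem enorm_FT_le (f : EuclideanSpace ℝ (Fin n) → ℂ) (ξ : EuclideanSpace ℝ (Fin n)) :
    ‖FT n f ξ‖ₑ ≤ ∫⁻ x, ‖f x‖ₑ := by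
  rw [FT, enorm_smul]
  calc _ ≤ 1 * ∫⁻ x, ‖Complex.exp (-I * ((⟪x, ξ⟫ : ℝ) : ℂ)) * f x‖ₑ := by
        gcongr
        · rw [Real.enorm_of_nonneg (by positivity), ← ENNReal.ofReal_one]
          exact ENNReal.ofReal_le_ofReal two_pi_rpow_le_one
        · exact enorm_integral_le_lintegral_enorm _
    _ = ∫⁻ x, ‖f x‖ₑ := by
        simp_rw [one_mul, enorm_mul, ← ofReal_norm (Complex.exp _), norm_exp_neg_I_mul_inner,
          ENNReal.ofReal_one, one_mul]

theorem norm_FT_le (hf : Integrable f) (ξ : EuclideanSpace ℝ (Fin n)) :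
    ‖FT n f ξ‖ ≤ ∫ x, ‖f x‖ := by
  rw [integral_norm_eq_lintegral_enorm hf.1, ← toReal_enorm]
  exact ENNReal.toReal_mono hf.2.ne (enorm_FT_le f ξ)

theorem continuous_FT (hf : Integrable f) : Continuous (FT n f) := by
  have := continuous_fourier_of_integrable hf
  rw [FT_eq_fourier]
  fun_prop

theorem FT_add (hf : Integrable f) (hg : Integrable g) (ξ : EuclideanSpace ℝ (Fin n)) :
    FT n (fun x => f x + g x) ξ = FT n f ξ + FT n g ξ := by
  simp only [FT, mul_add]
  rw [integral_add (integrable_exp_mul hf ξ) (integrable_exp_mul hg ξ), smul_add]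

theorem lintegral_comp_smul (F : EuclideanSpace ℝ (Fin n) → ℝ≥0∞) {s : ℝ} (hs : 0 < s) :
    ∫⁻ ξ, F (s • ξ) = ENNReal.ofReal (s ^ n)⁻¹ * ∫⁻ ξ, F ξ := by
  have h : MeasurableEmbedding fun ξ : EuclideanSpace ℝ (Fin n) => s • ξ :=
    (Homeomorph.smulOfNeZero s hs.ne').measurableEmbedding
  rw [← h.lintegral_map, Measure.map_addHaar_smul _ hs.ne', lintegral_smul_measure,
    finrank_euclideanSpace_fin, abs_of_pos (by positivity), smul_eq_mul]

theorem lintegral_enorm_sq_FT_eq (hf : Integrable f) (hf2 : MemLp f 2) :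
    ∫⁻ ξ, ‖FT n f ξ‖ₑ ^ 2 = ∫⁻ x, ‖f x‖ₑ ^ 2 := by
  have hp : (0 : ℝ) < 2 * π := by positivity
  have hconst : ((2 * π) ^ (-(n : ℝ) / 2)) ^ 2 * (((2 * π)⁻¹ ^ n)⁻¹) = 1 := by
    rw [inv_pow, inv_inv, ← Real.rpow_natCast, ← Real.rpow_mul hp.le, ← Real.rpow_natCast,
      ← Real.rpow_add hp]
    norm_num
  simp only [FT_eq_fourier, enorm_smul, mul_pow]
  rw [lintegral_const_mul' _ _ (by simp),
    lintegral_comp_smul (fun ξ => ‖𝓕 f ξ‖ₑ ^ 2) (inv_pos.2 hp), ← mul_assoc, ← eLpNorm_two_sq,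
    eLpNorm_two_fourier_eq hf hf2, eLpNorm_two_sq, Real.enorm_of_nonneg (by positivity),
    ← ENNReal.ofReal_pow (by positivity), ← ENNReal.ofReal_mul (by positivity), hconst,
    ENNReal.ofReal_one, one_mul]

theorem hasFDerivAt_FT (hf : Integrable f) (hf1 : Integrable fun x => ‖x‖ * ‖f x‖)
    (ξ : EuclideanSpace ℝ (Fin n)) : HasFDerivAt (FT n f)
      ((((2 * π) ^ (-(n : ℝ) / 2) : ℝ) * (2 * π)⁻¹) •
        𝓕 (VectorFourier.fourierSMulRight (innerSL ℝ) f) ((2 * π)⁻¹ • ξ)) ξ := by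
  have h := (((Real.hasFDerivAt_fourier hf hf1 ((2 * π)⁻¹ • ξ)).comp ξ
    ((hasFDerivAt_id ξ).const_smul (2 * π)⁻¹)).const_smul ((2 * π) ^ (-(n : ℝ) / 2) : ℝ))
  rw [FT_eq_fourier]
  refine h.congr_fderiv ?_
  ext η
  simp [mul_assoc]

theorem contDiff_FT (hf : Integrable f) (hf1 : Integrable fun x => ‖x‖ * ‖f x‖) :
    ContDiff ℝ 1 (FT n f) := by
  have h : ContDiff ℝ 1 (𝓕 f) := by
    refine Real.contDiff_fourier (N := 1) fun k hk => ?_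
    have hk' : k ≤ 1 := by exact_mod_cast hk
    interval_cases k
    · simpa using hf.norm
    · simpa using hf1
  rw [FT_eq_fourier]
  exact (h.comp (contDiff_const_smul _)).const_smul _

theorem integrable_coord_mul (hf : Integrable f) (hf1 : Integrable fun x => ‖x‖ * ‖f x‖)
    (j : Fin n) : Integrable fun x => ((x j : ℝ) : ℂ) * f x := by
  refine hf1.mono (by have := hf.1; fun_prop) (ae_of_all _ fun x => ?_)
  simp only [norm_mul, norm_norm, norm_real]
  gcongr
  exact PiLp.norm_apply_le x j

theorem fderiv_FT_single (hf : Integrable f) (hf1 : Integrable fun x => ‖x‖ * ‖f x‖)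
    (ξ : EuclideanSpace ℝ (Fin n)) (j : Fin n) :
    fderiv ℝ (FT n f) ξ (EuclideanSpace.single j 1)
      = -I * FT n (fun x => ((x j : ℝ) : ℂ) * f x) ξ := by
  have hint : Integrable (VectorFourier.fourierSMulRight (innerSL ℝ) f) := by
    refine (hf1.const_mul (2 * π)).mono' hf.1.fourierSMulRight (ae_of_all _ fun x => ?_)
    rw [VectorFourier.norm_fourierSMulRight, innerSL_apply_norm, mul_assoc]
  have hcoord : (fun x => VectorFourier.fourierSMulRight (innerSL ℝ) f x
      (EuclideanSpace.single j 1)) = (-(2 * π * I)) • fun x => ((x j : ℝ) : ℂ) * f x := by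
    ext x
    rw [VectorFourier.fourierSMulRight_apply, innerSL_apply_apply,
      EuclideanSpace.inner_single_right]
    simp
  have hsmul : ∀ η, 𝓕 ((-(2 * π * I)) • fun x => ((x j : ℝ) : ℂ) * f x) η
      = -(2 * π * I) • 𝓕 (fun x => ((x j : ℝ) : ℂ) * f x) η := fun η =>
    congrFun (VectorFourier.fourierIntegral_const_smul _ _ _ _ _) η
  rw [(hasFDerivAt_FT hf hf1 ξ).fderiv, smul_apply,
    Real.fourier_continuousLinearMap_apply hint, hcoord, hsmul, FT_eq_fourier]
  simp only [Complex.real_smul, smul_eq_mul]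
  push_cast
  field_simp

theorem norm_sq_le_sum_norm_sq_apply_single
    (L : EuclideanSpace ℝ (Fin n) →L[ℝ] ℂ) :
    ‖L‖ ^ 2 ≤ ∑ j, ‖L (EuclideanSpace.single j 1)‖ ^ 2 := by
  have h : ‖L‖ ≤ √(∑ j, ‖L (EuclideanSpace.single j 1)‖ ^ 2) := by
    refine L.opNorm_le_bound (Real.sqrt_nonneg _) fun η => ?_
    calc ‖L η‖ = ‖∑ j, η j • L (EuclideanSpace.single j 1)‖ := by
          conv_lhs => rw [← (EuclideanSpace.basisFun (Fin n) ℝ).sum_repr η]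
          simp
      _ ≤ ∑ j, ‖L (EuclideanSpace.single j 1)‖ * ‖η j‖ :=
          norm_sum_le_of_le _ fun j _ => by rw [norm_smul, mul_comm]
      _ ≤ √(∑ j, ‖L (EuclideanSpace.single j 1)‖ ^ 2) * ‖η‖ := by
          rw [EuclideanSpace.norm_eq]
          exact Real.sum_mul_le_sqrt_mul_sqrt _ _ _
  calc ‖L‖ ^ 2 ≤ √(∑ j, ‖L (EuclideanSpace.single j 1)‖ ^ 2) ^ 2 := by gcongr
    _ = _ := Real.sq_sqrt (Finset.sum_nonneg fun j _ => sq_nonneg _)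

theorem norm_sq_fderiv_FT_le (hf : Integrable f) (hf1 : Integrable fun x => ‖x‖ * ‖f x‖)
    (ξ : EuclideanSpace ℝ (Fin n)) :
    ‖fderiv ℝ (FT n f) ξ‖ ^ 2 ≤ ∑ j, ‖FT n (fun x => ((x j : ℝ) : ℂ) * f x) ξ‖ ^ 2 := by
  refine (norm_sq_le_sum_norm_sq_apply_single _).trans_eq ?_
  simp only [fderiv_FT_single hf hf1, norm_mul, norm_neg, norm_I, one_mul]

end FourierTransform

section MultiplierPairing

theorem integral_mult_mul_conj {n : ℕ} {q f g : EuclideanSpace ℝ (Fin n) → ℂ}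
    (hq : Integrable fun ξ => q ξ * FT n f ξ) (hg : Integrable g) :
    ∫ x, mult n q f x * conj (g x) = ∫ ξ, q ξ * FT n f ξ * conj (FT n g ξ) := by
  have hconj : ∀ ξ, conj (FT n g ξ) = ((2 * π) ^ (-(n : ℝ) / 2) : ℝ) *
      ∫ x, Complex.exp (I * ((⟪x, ξ⟫ : ℝ) : ℂ)) * conj (g x) := fun ξ => by
    rw [FT, Complex.real_smul, map_mul, ← integral_conj, Complex.conj_ofReal]
    congr 2
    ext x
    rw [map_mul, ← Complex.exp_conj]
    simp
  have hprod : Integrable (Function.uncurry fun x ξ : EuclideanSpace ℝ (Fin n) =>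
      Complex.exp (I * ((⟪x, ξ⟫ : ℝ) : ℂ)) * (conj (g x) * (q ξ * FT n f ξ))) :=
    ((integrable_conj hg).mul_prod hq).bdd_mul (c := 1) (by fun_prop)
      (ae_of_all _ fun p => by simp [Complex.norm_exp])
  calc ∫ x, mult n q f x * conj (g x)
      = ((2 * π) ^ (-(n : ℝ) / 2) : ℝ) * ∫ x, ∫ ξ,
          Complex.exp (I * ((⟪x, ξ⟫ : ℝ) : ℂ)) * (conj (g x) * (q ξ * FT n f ξ)) := by
        rw [← integral_const_mul]
        congr 1
        ext x
        rw [mult, IFT, Complex.real_smul, mul_assoc, ← integral_mul_const]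
        congr! 3
        ring
    _ = ((2 * π) ^ (-(n : ℝ) / 2) : ℝ) * ∫ ξ, ∫ x,
          Complex.exp (I * ((⟪x, ξ⟫ : ℝ) : ℂ)) * (conj (g x) * (q ξ * FT n f ξ)) := by
        rw [integral_integral_swap hprod]
    _ = ∫ ξ, q ξ * FT n f ξ * conj (FT n g ξ) := by
        rw [← integral_const_mul]
        congr 1
        ext ξ
        rw [hconj, mul_left_comm, ← integral_const_mul (q ξ * FT n f ξ)]
        congr! 3
        ring

end MultiplierPairing

/-- The half-line through `θ`, parametrized so that a homogeneous function of degree `m` is linear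
in `t` along it. -/
def ray {E : Type*} [NormedAddCommGroup E] [NormedSpace ℝ E] (m b : ℝ) (θ : E) (t : ℝ) : E :=
  (t ^ (1 / m) * b) • θ

section Polar

variable {n : ℕ} {F : Type*} [NormedAddCommGroup F] {G : EuclideanSpace ℝ (Fin n) → F}

theorem integrable_polar (hG : Integrable G) :
    Integrable (fun p : sphere (0 : EuclideanSpace ℝ (Fin n)) 1 × Ioi (0 : ℝ) =>
      G (p.2.1 • p.1.1))
      ((volume : Measure (EuclideanSpace ℝ (Fin n))).toSphere.prod (.volumeIoiPow (n - 1))) := by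
  have hpolar :=
    (volume : Measure (EuclideanSpace ℝ (Fin n))).measurePreserving_homeomorphUnitSphereProd
  rw [finrank_euclideanSpace_fin] at hpolar
  rw [← hpolar.integrable_comp_emb (Homeomorph.measurableEmbedding _)]
  have hG0 : Integrable (G ∘ (Subtype.val : ({0}ᶜ : Set (EuclideanSpace ℝ (Fin n))) → _))
      ((volume : Measure (EuclideanSpace ℝ (Fin n))).comap (↑)) := by
    rw [← integrableOn_iff_comap_subtypeVal (measurableSet_singleton _).compl]
    exact hG.integrableOn
  convert hG0 using 1
  ext x
  simp [homeomorphUnitSphereProd, smul_smul, norm_ne_zero_iff.2 x.2]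

variable [NormedSpace ℝ F]

theorem integral_volumeIoiPow (k : ℕ) (g : ℝ → F) :
    ∫ x : Ioi (0 : ℝ), g x ∂(.volumeIoiPow k) = ∫ r in Ioi (0 : ℝ), r ^ k • g r := by
  simp only [Measure.volumeIoiPow, ENNReal.ofReal]
  rw [integral_withDensity_eq_integral_smul (measurable_subtype_coe.pow_const _).real_toNNReal,
    integral_subtype_comap measurableSet_Ioi fun a => Real.toNNReal (a ^ k) • g a]
  refine setIntegral_congr_fun measurableSet_Ioi fun x hx => ?_
  rw [NNReal.smul_def, Real.coe_toNNReal _ (pow_nonneg (le_of_lt hx) _)]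

theorem integral_polar (hG : Integrable G) (hn : n ≠ 0) :
    Integrable (fun θ : sphere (0 : EuclideanSpace ℝ (Fin n)) 1 =>
        ∫ r in Ioi (0 : ℝ), r ^ (n - 1) • G (r • θ.1)) volume.toSphere ∧
    ∫ ξ, G ξ = ∫ θ : sphere (0 : EuclideanSpace ℝ (Fin n)) 1,
      (∫ r in Ioi (0 : ℝ), r ^ (n - 1) • G (r • θ.1)) ∂volume.toSphere := by
  have hp := integrable_polar hG
  have h :=
    (volume : Measure (EuclideanSpace ℝ (Fin n))).measurePreserving_homeomorphUnitSphereProd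
  rw [finrank_euclideanSpace_fin] at h
  have : Nontrivial (EuclideanSpace ℝ (Fin n)) :=
    Module.nontrivial_of_finrank_pos (R := ℝ) (by rw [finrank_euclideanSpace_fin]; omega)
  have hray (θ : sphere (0 : EuclideanSpace ℝ (Fin n)) 1) :=
    integral_volumeIoiPow (n - 1) fun r => G (r • θ.1)
  simp_rw [← hray]
  refine ⟨hp.integral_prod_left, ?_⟩
  rw [integral_integral hp, ← h.integral_comp (Homeomorph.measurableEmbedding _)]
  have h0 := integral_subtype_comap (μ := volume) (measurableSet_singleton _).compl
    (s := ({0}ᶜ : Set (EuclideanSpace ℝ (Fin n)))) G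
  rw [restrict_compl_singleton] at h0
  rw [← h0]
  refine integral_congr_ae (ae_of_all _ fun x => ?_)
  simp [homeomorphUnitSphereProd, smul_smul, norm_ne_zero_iff.2 x.2]

theorem integral_Ioi_pow_smul_eq (hn : n ≠ 0) {m b : ℝ} (hm : 0 < m) (hb : 0 < b) (g : ℝ → F) :
    ∫ r in Ioi (0 : ℝ), r ^ (n - 1) • g r
      = ∫ t in Ioi (0 : ℝ), (m⁻¹ * b ^ n * t ^ (n / m - 1)) • g (t ^ (1 / m) * b) := by
  have hscale := integral_comp_mul_right_Ioi' (fun r => r ^ (n - 1) • g r) 0 hb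
  rw [zero_mul] at hscale
  rw [← hscale, ← integral_comp_rpow_Ioi _ (one_div_ne_zero hm.ne'), ← integral_smul]
  refine setIntegral_congr_fun measurableSet_Ioi fun t ht => ?_
  have ht : 0 < t := ht
  have hexponent : (n : ℝ) / m - 1 = (1 / m - 1) + (1 / m) * ((n - 1 : ℕ) : ℝ) := by
    rw [Nat.cast_sub (Nat.one_le_iff_ne_zero.2 hn)]
    push_cast
    ring
  have hpow : b ^ n = b ^ (n - 1) * b := (pow_sub_one_mul hn b).symm
  simp only [smul_smul]
  rw [mul_pow, ← Real.rpow_natCast (t ^ (1 / m)), ← Real.rpow_mul ht.le,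
    abs_of_pos (by positivity), hexponent, Real.rpow_add ht, hpow]
  ring_nf

theorem integral_eq_integral_sphere_ray (hG : Integrable G) (hn : n ≠ 0) {m : ℝ} (hm : 0 < m)
    {b : sphere (0 : EuclideanSpace ℝ (Fin n)) 1 → ℝ} (hb : ∀ θ, 0 < b θ) :
    Integrable (fun θ => ∫ t in Ioi (0 : ℝ),
        (m⁻¹ * b θ ^ n * t ^ (n / m - 1)) • G (ray m (b θ) θ.1 t)) volume.toSphere ∧
      ∫ ξ, G ξ = ∫ θ, (∫ t in Ioi (0 : ℝ),
        (m⁻¹ * b θ ^ n * t ^ (n / m - 1)) • G (ray m (b θ) θ.1 t)) ∂volume.toSphere := by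
  have hray θ := integral_Ioi_pow_smul_eq hn hm (hb θ) fun r => G (r • θ.1)
  simp_rw [ray, ← hray]
  exact integral_polar hG hn

end Polar

section LocalizedEnergy

variable {u φ : ℝ → ℂ} {w : ℝ → ℝ} {I U : Set ℝ} {μ ν M : ℝ} {t : ℝ}

theorem energy_eq_univ (hu : ∀ t ∉ I, u t = 0 ∧ deriv u t = 0) :
    energy I μ u = energy univ μ u := by
  rw [energy, energy, Measure.restrict_univ]
  refine setIntegral_eq_integral_of_forall_compl_eq_zero fun t ht => ?_
  simp [(hu t ht).1, (hu t ht).2]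

theorem continuousOn_energyDensity (hU : IsOpen U) (hφ : ContDiffOn ℝ 1 φ U) :
    ContinuousOn (fun t => μ * ‖φ t‖ ^ 2 + μ⁻¹ * ‖deriv φ t‖ ^ 2) U := by
  have h := hφ.continuousOn
  have h' := hφ.continuousOn_deriv_of_isOpen hU le_rfl
  fun_prop

theorem norm_sq_deriv_smul_le (hw : DifferentiableAt ℝ w t) (hφ : DifferentiableAt ℝ φ t)
    (hM : |w t| ≤ M) (hM' : |deriv w t| ≤ M) :
    ‖deriv (fun t => w t • φ t) t‖ ^ 2 ≤ 2 * M ^ 2 * (‖φ t‖ ^ 2 + ‖deriv φ t‖ ^ 2) := by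
  have h : ‖deriv (fun t => w t • φ t) t‖ ≤ M * ‖deriv φ t‖ + M * ‖φ t‖ := by
    rw [deriv_fun_smul hw hφ]
    refine (norm_add_le _ _).trans ?_
    rw [norm_smul, norm_smul]
    gcongr <;> assumption
  calc _ ≤ (M * ‖deriv φ t‖ + M * ‖φ t‖) ^ 2 := by gcongr
    _ ≤ 2 * M ^ 2 * (‖φ t‖ ^ 2 + ‖deriv φ t‖ ^ 2) := by
      nlinarith [sq_nonneg (M * ‖deriv φ t‖ - M * ‖φ t‖)]

theorem energy_smul_le (hI : IsCompact I) (hU : IsOpen U) (hIU : I ⊆ U) (hμ : 1 ≤ μ)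
    (hφ : ContDiffOn ℝ 1 φ U) (hw : ContDiffOn ℝ 1 w U) (hM : ∀ t ∈ I, |w t| ≤ M)
    (hM' : ∀ t ∈ I, |deriv w t| ≤ M) :
    energy I μ (fun t => w t • φ t) ≤ 3 * M ^ 2 * energy I μ φ := by
  rw [energy, energy, ← integral_const_mul]
  refine setIntegral_mono_on
    (((continuousOn_energyDensity hU (hw.smul hφ)).mono hIU).integrableOn_compact hI)
    ((((continuousOn_energyDensity hU hφ).mono hIU).integrableOn_compact hI).const_mul _)
    hI.measurableSet fun t ht => ?_
  have hUt := hU.mem_nhds (hIU ht)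
  have hder := norm_sq_deriv_smul_le ((hw.differentiableOn one_ne_zero).differentiableAt hUt)
    ((hφ.differentiableOn one_ne_zero).differentiableAt hUt) (hM t ht) (hM' t ht)
  have hval : ‖w t • φ t‖ ^ 2 ≤ M ^ 2 * ‖φ t‖ ^ 2 := by
    rw [norm_smul, mul_pow, Real.norm_eq_abs]
    gcongr
    exact hM t ht
  have hμ' : μ⁻¹ ≤ μ := (inv_le_one_of_one_le₀ hμ).trans hμ
  calc _ ≤ μ * (M ^ 2 * ‖φ t‖ ^ 2) + μ⁻¹ * (2 * M ^ 2 * (‖φ t‖ ^ 2 + ‖deriv φ t‖ ^ 2)) := by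
        gcongr
    _ = M ^ 2 * (μ * ‖φ t‖ ^ 2) + 2 * M ^ 2 * (μ⁻¹ * ‖φ t‖ ^ 2)
          + 2 * M ^ 2 * (μ⁻¹ * ‖deriv φ t‖ ^ 2) := by ring
    _ ≤ M ^ 2 * (μ * ‖φ t‖ ^ 2) + 2 * M ^ 2 * (μ * ‖φ t‖ ^ 2)
          + 3 * M ^ 2 * (μ⁻¹ * ‖deriv φ t‖ ^ 2) := by
        gcongr
        norm_num
    _ = _ := by ring

/-- A smooth cutoff equal to one near `t = 1` and supported in `[1/4, 7/4]`. -/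
def bump : ContDiffBump (1 : ℝ) := ⟨1 / 2, 3 / 4, by norm_num, by norm_num⟩

theorem tsupport_bump : tsupport bump = Icc (1 / 4) (7 / 4) := by
  rw [bump.tsupport_eq, Real.closedBall_eq_Icc]
  norm_num [bump]

theorem exists_bump_bound : ∃ K, 1 ≤ K ∧ ∀ t, |bump t| ≤ K ∧ |deriv bump t| ≤ K := by
  obtain ⟨K, hK⟩ := bump.contDiff.continuous_deriv (n := 1) le_rfl
    |>.bounded_above_of_compact_support bump.hasCompactSupport.deriv
  refine ⟨max 1 K, le_max_left _ _, fun t => ⟨?_, (hK t).trans (le_max_right _ _)⟩⟩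
  rw [abs_of_nonneg bump.nonneg]
  exact bump.le_one.trans (le_max_left _ _)

theorem bump_smul_eq_zero (ht : t ∉ Icc (1 / 4 : ℝ) (7 / 4)) :
    bump t • φ t = 0 ∧ deriv (fun t => bump t • φ t) t = 0 := by
  have h : t ∉ tsupport fun t => bump t • φ t := fun h =>
    ht (tsupport_bump ▸ tsupport_smul_subset_left _ _ h)
  exact ⟨image_eq_zero_of_notMem_tsupport (f := fun t => bump t • φ t) h,
    image_eq_zero_of_notMem_tsupport fun h' => h (tsupport_deriv_subset h')⟩

theorem contDiff_bump_smul (hφ : ContDiffOn ℝ 1 φ (Ioi 0)) :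
    ContDiff ℝ 1 fun t => bump t • φ t := by
  refine contMDiff_iff_contDiff.1 (contMDiff_of_tsupport fun t ht => ?_)
  have ht' : t ∈ Icc (1 / 4 : ℝ) (7 / 4) := tsupport_bump ▸ tsupport_smul_subset_left _ _ ht
  exact contMDiffAt_iff_contDiffAt.2 <| bump.contDiffAt.smul <|
    (hφ.contDiffAt (Ioi_mem_nhds (by linarith [ht'.1])))

theorem Icc_subset_Ioi_zero : Icc (1 / 4 : ℝ) (7 / 4) ⊆ Ioi 0 := fun t ht =>
  mem_Ioi.2 (by linarith [ht.1])

theorem exists_energy_bump_smul_le : ∃ K > 0, ∀ {μ : ℝ} {φ : ℝ → ℂ}, 1 ≤ μ →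
    ContDiffOn ℝ 1 φ (Ioi 0) →
    energy univ μ (fun t => bump t • φ t) ≤ K * energy (Icc (1 / 4) (7 / 4)) μ φ := by
  obtain ⟨K, hK1, hK⟩ := exists_bump_bound
  refine ⟨3 * K ^ 2, by positivity, fun hμ hφ => ?_⟩
  rw [← energy_eq_univ fun t ht => bump_smul_eq_zero ht]
  exact energy_smul_le isCompact_Icc isOpen_Ioi Icc_subset_Ioi_zero hμ hφ
    bump.contDiff.contDiffOn (fun t _ => (hK t).1) (fun t _ => (hK t).2)

theorem exists_norm_integral_resolvent_bump_le : ∃ K > 0, ∀ {z : ℂ} {μ ν : ℝ} {φ ψ : ℝ → ℂ},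
    z.im ≠ 0 → 1 ≤ μ → 1 ≤ ν → ContDiffOn ℝ 1 φ (Ioi 0) → ContDiffOn ℝ 1 ψ (Ioi 0) →
    ‖∫ t : ℝ, (z - t)⁻¹ * (bump t • φ t * conj (bump t • ψ t))‖
      ≤ K * (√(energy (Icc (1 / 4) (7 / 4)) μ φ) * √(energy (Icc (1 / 4) (7 / 4)) ν ψ)) := by
  obtain ⟨K, hK0, hK⟩ := exists_energy_bump_smul_le
  refine ⟨2 * π * K, by positivity, fun {z μ ν φ ψ} hz hμ hν hφ hψ => ?_⟩
  have hsupp (φ : ℝ → ℂ) : HasCompactSupport fun t => bump t • φ t :=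
    bump.hasCompactSupport.smul_right
  calc _ ≤ 2 * π * (√(energy univ μ fun t => bump t • φ t)
        * √(energy univ ν fun t => bump t • ψ t)) :=
        norm_integral_resolvent_mul_conj_le hz (contDiff_bump_smul hφ) (hsupp φ)
          (contDiff_bump_smul hψ) (hsupp ψ) (by linarith) (by linarith)
    _ ≤ 2 * π * (√(K * energy (Icc (1 / 4) (7 / 4)) μ φ)
        * √(K * energy (Icc (1 / 4) (7 / 4)) ν ψ)) := by
        gcongr
        exacts [hK hμ hφ, hK hν hψ]
    _ = _ := by
        rw [Real.sqrt_mul hK0.le, Real.sqrt_mul hK0.le]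
        linear_combination (2 * π * √(energy (Icc (1 / 4) (7 / 4)) μ φ)
          * √(energy (Icc (1 / 4) (7 / 4)) ν ψ)) * Real.mul_self_sqrt hK0.le

end LocalizedEnergy

section Ray

variable {E : Type*} [NormedAddCommGroup E] [NormedSpace ℝ E] {F G : E → ℂ} {θ : E}
  {m b s t β κ p k μ : ℝ}

theorem norm_ray (hb : 0 ≤ b) (hθ : ‖θ‖ = 1) (ht : 0 ≤ t) : ‖ray m b θ t‖ = t ^ (1 / m) * b := by
  rw [ray, norm_smul, hθ, mul_one, Real.norm_of_nonneg (by positivity)]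

theorem hasDerivAt_ray (ht : 0 < t) :
    HasDerivAt (ray m b θ) ((1 / m * t ^ (1 / m - 1) * b) • θ) t :=
  ((Real.hasDerivAt_rpow_const (Or.inl ht.ne')).mul_const b).smul_const θ

theorem contDiffOn_rpow : ContDiffOn ℝ 1 (fun t : ℝ => t ^ p) (Ioi 0) := fun _ ht =>
  (Real.contDiffAt_rpow_const_of_ne (ne_of_gt ht)).contDiffWithinAt

theorem contDiffOn_comp_ray (hF : ContDiff ℝ 1 F) :
    ContDiffOn ℝ 1 (fun t => F (ray m b θ t)) (Ioi 0) :=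
  hF.comp_contDiffOn ((contDiffOn_rpow.mul contDiffOn_const).smul contDiffOn_const)

theorem rpow_le_two_of_mem_Icc (ht : t ∈ Icc (1 / 4 : ℝ) (7 / 4)) (hκ0 : 0 ≤ κ) (hκ1 : κ ≤ 1) :
    t ^ κ ≤ 2 :=
  calc t ^ κ ≤ 2 ^ κ := Real.rpow_le_rpow (by linarith [ht.1]) (by linarith [ht.2]) hκ0
    _ ≤ 2 ^ (1 : ℝ) := Real.rpow_le_rpow_of_exponent_le one_le_two hκ1
    _ = 2 := Real.rpow_one 2

theorem norm_deriv_comp_ray_le (hm : 1 ≤ m) (hb : 0 ≤ b) (hθ : ‖θ‖ = 1)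
    (hF : Differentiable ℝ F) (ht : t ∈ Icc (1 / 4 : ℝ) (7 / 4)) :
    ‖deriv (fun t => F (ray m b θ t)) t‖ ≤ 4 * b * ‖fderiv ℝ F (ray m b θ t)‖ := by
  have ht0 : 0 < t := Icc_subset_Ioi_zero ht
  have hm' : 1 / m ≤ 1 := (div_le_one (by linarith)).2 hm
  have hpow : t ^ (1 / m - 1) ≤ 4 :=
    calc t ^ (1 / m - 1) ≤ (1 / 4 : ℝ) ^ (1 / m - 1) :=
          Real.rpow_le_rpow_of_nonpos (by norm_num) ht.1 (by linarith)
      _ ≤ (1 / 4 : ℝ) ^ (-1 : ℝ) :=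
          Real.rpow_le_rpow_of_exponent_ge (by norm_num) (by norm_num)
            (by linarith [show 0 ≤ 1 / m by positivity])
      _ = 4 := by norm_num [Real.rpow_neg_one]
  have hder : HasDerivAt (fun t => F (ray m b θ t)) _ t :=
    (hF _).hasFDerivAt.comp_hasDerivAt t (hasDerivAt_ray ht0)
  rw [hder.deriv]
  calc _ ≤ ‖fderiv ℝ F (ray m b θ t)‖ * ‖(1 / m * t ^ (1 / m - 1) * b) • θ‖ :=
        ContinuousLinearMap.le_opNorm _ _
    _ ≤ ‖fderiv ℝ F (ray m b θ t)‖ * (1 * 4 * b) := by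
        rw [norm_smul, hθ, mul_one, Real.norm_of_nonneg (by positivity)]
        gcongr
    _ = 4 * b * ‖fderiv ℝ F (ray m b θ t)‖ := by ring

theorem hasDerivAt_rpow_mul_sqrt_rpow (ht : 0 < t) :
    HasDerivAt (fun t => t ^ β * √(1 + (t ^ κ * b) ^ 2) ^ p)
      (t ^ β * √(1 + (t ^ κ * b) ^ 2) ^ p / t
        * (β + p * κ * ((t ^ κ * b) ^ 2 / (1 + (t ^ κ * b) ^ 2)))) t := by
  have hpos : 0 < 1 + (t ^ κ * b) ^ 2 := by positivity
  have hrpow (q : ℝ) : HasDerivAt (fun t : ℝ => t ^ q) (q * t ^ (q - 1)) t :=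
    Real.hasDerivAt_rpow_const (Or.inl ht.ne')
  have hsqrt := ((((hrpow κ).mul_const b).fun_pow 2).const_add 1).sqrt hpos.ne'
  refine ((hrpow β).mul (hsqrt.rpow_const (p := p) (Or.inl (by positivity)))).congr_deriv ?_
  rw [Real.rpow_sub_one ht.ne', Real.rpow_sub_one ht.ne', Real.rpow_sub_one (by positivity)]
  have hsq := Real.sq_sqrt hpos.le
  have hR : 0 < √(1 + (t ^ κ * b) ^ 2) := by positivity
  set R := √(1 + (t ^ κ * b) ^ 2)
  rw [← hsq]
  field_simp
  push_cast
  ring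

theorem sqrt_one_add_mul_sq_rpow_le (hk : 0 ≤ k) (hp : 0 ≤ p) :
    √(1 + (k * s) ^ 2) ^ p ≤ (1 + k) ^ p * √(1 + s ^ 2) ^ p := by
  rw [← Real.mul_rpow (by positivity) (by positivity)]
  refine Real.rpow_le_rpow (by positivity) ?_ hp
  rw [← Real.sqrt_sq (by positivity : 0 ≤ 1 + k), ← Real.sqrt_mul (by positivity)]
  refine Real.sqrt_le_sqrt ?_
  nlinarith [mul_nonneg hk (sq_nonneg s), sq_nonneg k]

theorem rpow_mul_sqrt_rpow_le (hβ : 0 ≤ β) (hp : 0 ≤ p) (hκ0 : 0 ≤ κ) (hκ1 : κ ≤ 1)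
    (hb : 0 ≤ b) (hk : 0 ≤ k) (hbs : b ≤ k * s) (ht : t ∈ Icc (1 / 4 : ℝ) (7 / 4)) :
    t ^ β * √(1 + (t ^ κ * b) ^ 2) ^ p ≤ 2 ^ β * (1 + 2 * k) ^ p * √(1 + s ^ 2) ^ p := by
  have ht0 : 0 < t := Icc_subset_Ioi_zero ht
  have harg : t ^ κ * b ≤ 2 * k * s := by
    rw [mul_assoc]
    gcongr
    exact rpow_le_two_of_mem_Icc ht hκ0 hκ1
  rw [mul_assoc]
  gcongr
  · linarith [ht.2]
  · exact le_trans (by gcongr) (sqrt_one_add_mul_sq_rpow_le (by positivity) hp)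

theorem abs_deriv_rpow_mul_sqrt_rpow_le (hβ : 0 ≤ β) (hp : 0 ≤ p) (hκ : 0 ≤ κ)
    (hpκ : p * κ ≤ 1) (ht : t ∈ Icc (1 / 4 : ℝ) (7 / 4)) :
    |deriv (fun t => t ^ β * √(1 + (t ^ κ * b) ^ 2) ^ p) t|
      ≤ 4 * (β + 1) * (t ^ β * √(1 + (t ^ κ * b) ^ 2) ^ p) := by
  have ht0 : 0 < t := Icc_subset_Ioi_zero ht
  rw [(hasDerivAt_rpow_mul_sqrt_rpow ht0).deriv, abs_of_nonneg (by positivity), div_eq_mul_inv]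
  calc _ ≤ t ^ β * √(1 + (t ^ κ * b) ^ 2) ^ p * 4 * (β + 1 * 1) := by
        gcongr
        · exact inv_le_of_inv_le₀ (by norm_num) (by linarith [ht.1])
        · exact div_le_one_of_le₀ (by linarith) (by positivity)
    _ = _ := by ring

theorem contDiffOn_rpow_mul_sqrt_rpow :
    ContDiffOn ℝ 1 (fun t => t ^ β * √(1 + (t ^ κ * b) ^ 2) ^ p) (Ioi 0) :=
  contDiffOn_rpow.mul (((contDiffOn_const.add ((contDiffOn_rpow.mul contDiffOn_const).pow 2)).sqrt
    fun t _ => by positivity).rpow_const_of_ne fun t _ => by positivity)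

theorem exists_energy_weight_smul_le (hβ : 0 ≤ β) (hm : 1 ≤ m) (hk : 0 ≤ k) :
    ∃ K > 0, ∀ {b s μ : ℝ} {φ : ℝ → ℂ}, 0 ≤ b → b ≤ k * s → 1 ≤ μ → ContDiffOn ℝ 1 φ (Ioi 0) →
      energy (Icc (1 / 4) (7 / 4)) μ
          (fun t => (t ^ β * √(1 + (t ^ (1 / m) * b) ^ 2) ^ (m - 1)) • φ t)
        ≤ K * (√(1 + s ^ 2) ^ (m - 1)) ^ 2 * energy (Icc (1 / 4) (7 / 4)) μ φ := by
  have hκ1 : 1 / m ≤ 1 := (div_le_one (by linarith)).2 hm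
  have hpκ : (m - 1) * (1 / m) ≤ 1 := by rw [mul_one_div, div_le_one (by linarith)]; linarith
  set c := 2 ^ β * (1 + 2 * k) ^ (m - 1)
  have hc : 0 < c := by positivity
  refine ⟨3 * (4 * (β + 1) * c) ^ 2, by positivity, fun {b s μ φ} hb hbs hμ hφ => ?_⟩
  have hle {t : ℝ} (ht : t ∈ Icc (1 / 4 : ℝ) (7 / 4)) :
      4 * (β + 1) * (t ^ β * √(1 + (t ^ (1 / m) * b) ^ 2) ^ (m - 1))
        ≤ 4 * (β + 1) * (c * √(1 + s ^ 2) ^ (m - 1)) :=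
    mul_le_mul_of_nonneg_left
      (rpow_mul_sqrt_rpow_le hβ (by linarith) (by positivity) hκ1 hb hk hbs ht) (by positivity)
  refine (energy_smul_le isCompact_Icc isOpen_Ioi Icc_subset_Ioi_zero hμ hφ
    contDiffOn_rpow_mul_sqrt_rpow (fun t ht => ?_) fun t ht =>
    (abs_deriv_rpow_mul_sqrt_rpow_le hβ (by linarith) (by positivity) hpκ ht).trans
      (hle ht)).trans_eq (by ring)
  have ht0 : 0 < t := Icc_subset_Ioi_zero ht
  rw [abs_of_nonneg (by positivity)]
  exact (le_mul_of_one_le_left (by positivity) (by linarith)).trans (hle ht)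

/-- The density of the `H¹` energy on `E` at frequency scale `s` with relative scale `μ`. -/
def energyDensity (s μ : ℝ) (F : E → ℂ) (ξ : E) : ℝ :=
  μ * ‖F ξ‖ ^ 2 + μ⁻¹ * s ^ 2 * ‖fderiv ℝ F ξ‖ ^ 2

theorem continuous_energyDensity (hF : ContDiff ℝ 1 F) : Continuous (energyDensity s μ F) := by
  have := hF.continuous
  have := hF.continuous_fderiv one_ne_zero
  unfold energyDensity
  fun_prop

theorem energyDensity_nonneg (hμ : 0 ≤ μ) (ξ : E) : 0 ≤ energyDensity s μ F ξ := by
  unfold energyDensity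
  positivity

theorem exists_energy_comp_ray_le (hβ : 0 ≤ β) (hm : 1 ≤ m) :
    ∃ K > 0, ∀ {b s μ : ℝ} {θ : E} {F : E → ℂ}, 0 ≤ b → b ≤ k * s → 0 < μ → ‖θ‖ = 1 →
      ContDiff ℝ 1 F → energy (Icc (1 / 4) (7 / 4)) μ (fun t => F (ray m b θ t))
        ≤ K * ∫ t in Icc (1 / 4) (7 / 4), t ^ β * energyDensity s μ F (ray m b θ t) := by
  refine ⟨4 ^ β * (1 + 16 * k ^ 2), by positivity, fun {b s μ θ F} hb hbs hμ hθ hF => ?_⟩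
  have hcont : ContinuousOn (fun t => t ^ β * energyDensity s μ F (ray m b θ t)) (Ioi 0) :=
    contDiffOn_rpow.continuousOn.mul ((continuous_energyDensity hF).comp_continuousOn
      fun t ht => (hasDerivAt_ray ht).continuousAt.continuousWithinAt)
  rw [energy, ← integral_const_mul]
  refine setIntegral_mono_on
    (((continuousOn_energyDensity isOpen_Ioi (contDiffOn_comp_ray hF)).mono
      Icc_subset_Ioi_zero).integrableOn_compact isCompact_Icc)
    (((hcont.mono Icc_subset_Ioi_zero).integrableOn_compact isCompact_Icc).const_mul _)
    measurableSet_Icc fun t ht => ?_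
  have ht0 : 0 < t := Icc_subset_Ioi_zero ht
  have hder : ‖deriv (fun t => F (ray m b θ t)) t‖ ^ 2
      ≤ 16 * k ^ 2 * (s ^ 2 * ‖fderiv ℝ F (ray m b θ t)‖ ^ 2) :=
    calc _ ≤ (4 * (k * s) * ‖fderiv ℝ F (ray m b θ t)‖) ^ 2 := by
          gcongr
          exact (norm_deriv_comp_ray_le hm hb hθ (hF.differentiable one_ne_zero) ht).trans
            (by gcongr)
      _ = _ := by ring
  have hpow : 1 ≤ 4 ^ β * t ^ β := by
    rw [← Real.mul_rpow (by norm_num) ht0.le]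
    exact Real.one_le_rpow (by linarith [ht.1]) hβ
  calc _ ≤ 1 * (μ * ‖F (ray m b θ t)‖ ^ 2)
        + μ⁻¹ * (16 * k ^ 2 * (s ^ 2 * ‖fderiv ℝ F (ray m b θ t)‖ ^ 2)) := by
        rw [one_mul]
        gcongr
    _ ≤ (1 + 16 * k ^ 2) * (μ * ‖F (ray m b θ t)‖ ^ 2)
        + (1 + 16 * k ^ 2) * (μ⁻¹ * (s ^ 2 * ‖fderiv ℝ F (ray m b θ t)‖ ^ 2)) := by
        rw [mul_left_comm μ⁻¹]
        gcongr <;> nlinarith [sq_nonneg k]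
    _ = 1 * ((1 + 16 * k ^ 2) * energyDensity s μ F (ray m b θ t)) := by
        rw [energyDensity]
        ring
    _ ≤ 4 ^ β * t ^ β * ((1 + 16 * k ^ 2) * energyDensity s μ F (ray m b θ t)) := by
        gcongr
        exact mul_nonneg (by positivity) (energyDensity_nonneg hμ.le _)
    _ = _ := by ring

theorem exists_norm_integral_ray_le (hβ : 0 ≤ β) (hm : 1 ≤ m) (hk : 0 ≤ k) :
    ∃ K > 0, ∀ {z : ℂ} {b s μ ν : ℝ} {θ : E} {F G : E → ℂ}, z.im ≠ 0 → 0 ≤ b → b ≤ k * s →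
      1 ≤ μ → 1 ≤ ν → ‖θ‖ = 1 → ContDiff ℝ 1 F → ContDiff ℝ 1 G →
      ‖∫ t : ℝ, (z - t)⁻¹ *
          (bump t • (t ^ β * √(1 + (t ^ (1 / m) * b) ^ 2) ^ (m - 1)) • F (ray m b θ t) *
            conj (bump t • G (ray m b θ t)))‖
        ≤ K * √(1 + s ^ 2) ^ (m - 1) *
          (√(∫ t in Icc (1 / 4) (7 / 4), t ^ β * energyDensity s μ F (ray m b θ t)) *
            √(∫ t in Icc (1 / 4) (7 / 4), t ^ β * energyDensity s ν G (ray m b θ t))) := by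
  obtain ⟨K₁, hK₁, hres⟩ := exists_norm_integral_resolvent_bump_le
  obtain ⟨K₂, hK₂, hweight⟩ := exists_energy_weight_smul_le hβ hm hk
  obtain ⟨K₃, hK₃, hray⟩ := exists_energy_comp_ray_le (E := E) (k := k) hβ hm
  refine ⟨K₁ * (√(K₂ * K₃) * √K₃), by positivity,
    fun {z b s μ ν θ F G} hz hb hbs hμ hν hθ hF hG => ?_⟩
  have hFray := contDiffOn_comp_ray (m := m) (b := b) (θ := θ) hF
  refine (hres hz hμ hν (contDiffOn_rpow_mul_sqrt_rpow.smul hFray)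
    (contDiffOn_comp_ray hG)).trans ?_
  set L := √(1 + s ^ 2) ^ (m - 1)
  have hL : 0 ≤ L := by positivity
  calc _ ≤ K₁ * (√(K₂ * L ^ 2 * (K₃ * ∫ t in Icc (1 / 4) (7 / 4),
            t ^ β * energyDensity s μ F (ray m b θ t))) *
          √(K₃ * ∫ t in Icc (1 / 4) (7 / 4), t ^ β * energyDensity s ν G (ray m b θ t))) := by
        gcongr
        · exact (hweight hb hbs hμ hFray).trans (by gcongr; exact hray hb hbs (by linarith) hθ hF)
        · exact hray hb hbs (by linarith) hθ hG
    _ = _ := by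
        rw [show ∀ A : ℝ, K₂ * L ^ 2 * (K₃ * A) = K₂ * K₃ * (L ^ 2 * A) from fun A => by ring,
          Real.sqrt_mul (by positivity), Real.sqrt_mul (sq_nonneg L), Real.sqrt_sq hL,
          Real.sqrt_mul hK₃.le]
        ring

end Ray

/-- A continuous symbol, positively homogeneous of degree one and positive away from the origin. -/
structure IsHomSymbol {E : Type*} [NormedAddCommGroup E] [NormedSpace ℝ E] (a : E → ℝ) : Prop where
  continuous : Continuous a
  map_smul : ∀ t : ℝ, 0 < t → ∀ ξ, a (t • ξ) = t * a ξ
  pos : ∀ ξ, ξ ≠ 0 → 0 < a ξ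

/-- The symbol of `⟨D⟩ ^ (m - 1) (ζ - a(D) ^ m)⁻¹`. -/
def resolventSymbol {E : Type*} [NormedAddCommGroup E] (a : E → ℝ) (m : ℝ) (ζ : ℂ) (ξ : E) : ℂ :=
  ((√(1 + ‖ξ‖ ^ 2) ^ (m - 1) : ℝ) : ℂ) * (ζ - ((a ξ ^ m : ℝ) : ℂ))⁻¹

/-- A smooth cutoff to the frequencies where `a ^ m` is comparable to `s ^ m`. -/
def cutoff {E : Type*} (a : E → ℝ) (m s : ℝ) (ξ : E) : ℝ := bump ((a ξ / s) ^ m)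

/-- The frequency shell carrying `cutoff a m s`. -/
def shell {E : Type*} (a : E → ℝ) (m s : ℝ) : Set E := {ξ | (a ξ / s) ^ m ∈ Icc (1 / 4) (7 / 4)}

/-- The `H¹` energy of `F` on the shell at frequency `s`. -/
def shellEnergy {E : Type*} [NormedAddCommGroup E] [NormedSpace ℝ E] [MeasureSpace E]
    (a : E → ℝ) (m s μ : ℝ) (F : E → ℂ) : ℝ :=
  ∫ ξ in shell a m s, energyDensity s μ F ξ

section Symbol

variable {E : Type*} [NormedAddCommGroup E] {a : E → ℝ} {m s c β κ : ℝ} {ζ : ℂ} {ξ θ : E}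
  {F G : E → ℂ}

theorem isClosed_shell (ha : Continuous a) (hm : 0 ≤ m) : IsClosed (shell a m s) :=
  isClosed_Icc.preimage ((ha.div_const s).rpow_const fun _ => Or.inr hm)

theorem continuous_cutoff (ha : Continuous a) (hm : 0 ≤ m) : Continuous (cutoff a m s) :=
  bump.continuous.comp ((ha.div_const s).rpow_const fun _ => Or.inr hm)

theorem tsupport_cutoff_subset (ha : Continuous a) (hm : 0 ≤ m) :
    tsupport (cutoff a m s) ⊆ shell a m s := by
  rw [shell, ← tsupport_bump]
  exact tsupport_comp_subset_preimage bump ((ha.div_const s).rpow_const fun _ => Or.inr hm)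

theorem continuous_resolventSymbol (ha : Continuous a) (hm : 0 ≤ m) (hζ : ζ.im ≠ 0) :
    Continuous (resolventSymbol a m ζ) := by
  have hne ξ : ζ - ((a ξ ^ m : ℝ) : ℂ) ≠ 0 := fun h => hζ (by simpa using congrArg Complex.im h)
  have hrpow : Continuous fun ξ => a ξ ^ m := ha.rpow_const fun _ => Or.inr hm
  have hjap : Continuous fun ξ : E => √(1 + ‖ξ‖ ^ 2) ^ (m - 1) :=
    (by fun_prop : Continuous fun ξ : E => √(1 + ‖ξ‖ ^ 2)).rpow_const
      fun ξ => Or.inl (by positivity)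
  exact (Complex.continuous_ofReal.comp hjap).mul
    ((continuous_const.sub (Complex.continuous_ofReal.comp hrpow)).inv₀ hne)

theorem norm_le_of_mem_shell (hc : ∀ ξ, c * ‖ξ‖ ≤ a ξ) (hm : 1 ≤ m) (hs : 0 < s)
    (hξ : ξ ∈ shell a m s) : c * ‖ξ‖ ≤ 2 * s := by
  refine (hc ξ).trans (le_of_not_gt fun h => ?_)
  have htwo : 2 ≤ a ξ / s := by rw [le_div_iff₀ hs]; exact h.le
  have := Real.rpow_le_rpow_of_exponent_le (by linarith : 1 ≤ a ξ / s) hm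
  rw [Real.rpow_one] at this
  linarith [hξ.2]

namespace IsHomSymbol

variable [NormedSpace ℝ E]

theorem map_zero (ha : IsHomSymbol a) : a 0 = 0 := by
  have := ha.map_smul 2 (by norm_num) 0
  rw [smul_zero] at this
  linarith

theorem nonneg (ha : IsHomSymbol a) (ξ : E) : 0 ≤ a ξ := by
  by_cases hξ : ξ = 0
  · rw [hξ, ha.map_zero]
  · exact (ha.pos ξ hξ).le

theorem ne_zero_of_mem_shell (ha : IsHomSymbol a) (hm : 0 < m) (hξ : ξ ∈ shell a m s) :
    ξ ≠ 0 := by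
  rintro rfl
  rw [shell, mem_ofPred_eq, ha.map_zero, zero_div, Real.zero_rpow hm.ne'] at hξ
  norm_num at hξ

theorem eq_norm_mul (ha : IsHomSymbol a) (hξ : ξ ≠ 0) : a ξ = ‖ξ‖ * a (‖ξ‖⁻¹ • ξ) := by
  have := norm_pos_iff.2 hξ
  rw [ha.map_smul _ (by positivity), mul_inv_cancel_left₀ this.ne']

theorem exists_bounds [ProperSpace E] (ha : IsHomSymbol a) :
    ∃ c > 0, ∃ C > 0, ∀ ξ, c * ‖ξ‖ ≤ a ξ ∧ a ξ ≤ C * ‖ξ‖ := by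
  rcases subsingleton_or_nontrivial E with hE | hE
  · exact ⟨1, one_pos, 1, one_pos, fun ξ => by simp [Subsingleton.elim ξ 0, ha.map_zero]⟩
  have hne : (sphere (0 : E) 1).Nonempty := NormedSpace.sphere_nonempty.2 zero_le_one
  obtain ⟨x, hx, hmin⟩ := (isCompact_sphere _ _).exists_isMinOn hne ha.continuous.continuousOn
  obtain ⟨y, hy, hmax⟩ := (isCompact_sphere _ _).exists_isMaxOn hne ha.continuous.continuousOn
  refine ⟨a x, ha.pos x (ne_zero_of_mem_unit_sphere ⟨x, hx⟩), a y,
    ha.pos y (ne_zero_of_mem_unit_sphere ⟨y, hy⟩), fun ξ => ?_⟩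
  by_cases hξ : ξ = 0
  · simp [hξ, ha.map_zero]
  have hu : ‖ξ‖⁻¹ • ξ ∈ sphere (0 : E) 1 := by simp [norm_smul, norm_ne_zero_iff.2 hξ]
  rw [ha.eq_norm_mul hξ, mul_comm (a x), mul_comm (a y)]
  exact ⟨mul_le_mul_of_nonneg_left (hmin hu) (norm_nonneg ξ),
    mul_le_mul_of_nonneg_left (hmax hu) (norm_nonneg ξ)⟩

theorem isCompact_shell [ProperSpace E] (ha : IsHomSymbol a) (hm : 1 ≤ m) (hs : 0 < s) :
    IsCompact (shell a m s) := by
  obtain ⟨c, hc, C, -, hbound⟩ := ha.exists_bounds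
  refine (isCompact_closedBall 0 (2 * s / c)).of_isClosed_subset
    (isClosed_shell ha.continuous (by linarith)) fun ξ hξ => ?_
  rw [mem_closedBall_zero_iff, le_div_iff₀ hc, mul_comm]
  exact norm_le_of_mem_shell (fun ξ => (hbound ξ).1) hm hs hξ

theorem map_ray (ha : IsHomSymbol a) (hs : 0 < s) (hθ : θ ≠ 0) {t : ℝ} (ht : 0 < t) :
    a (ray m (s / a θ) θ t) = t ^ (1 / m) * s := by
  have hθ := ha.pos θ hθ
  rw [ray, ha.map_smul _ (by positivity)]
  field_simp

theorem map_ray_rpow (ha : IsHomSymbol a) (hm : 0 < m) (hs : 0 < s) (hθ : θ ≠ 0) {t : ℝ}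
    (ht : 0 < t) : a (ray m (s / a θ) θ t) ^ m = t * s ^ m := by
  rw [ha.map_ray hs hθ ht, Real.mul_rpow (by positivity) hs.le, ← Real.rpow_mul ht.le,
    one_div_mul_cancel hm.ne', Real.rpow_one]

theorem map_ray_div_rpow (ha : IsHomSymbol a) (hm : 0 < m) (hs : 0 < s) (hθ : θ ≠ 0) {t : ℝ}
    (ht : 0 < t) : (a (ray m (s / a θ) θ t) / s) ^ m = t := by
  rw [Real.div_rpow (ha.nonneg _) hs.le, ha.map_ray_rpow hm hs hθ ht,
    mul_div_cancel_right₀ _ (by positivity)]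

theorem integral_Ioi_indicator_shell_ray (ha : IsHomSymbol a) (hm : 0 < m) (hs : 0 < s)
    (hθ : θ ≠ 0) (κ β : ℝ) (D : E → ℝ) :
    ∫ t in Ioi (0 : ℝ), (κ * t ^ β) • (shell a m s).indicator D (ray m (s / a θ) θ t)
      = κ * ∫ t in Icc (1 / 4 : ℝ) (7 / 4), t ^ β * D (ray m (s / a θ) θ t) := by
  rw [← integral_const_mul, ← integral_indicator measurableSet_Ioi,
    ← integral_indicator measurableSet_Icc]
  congr 1
  ext t
  by_cases ht : 0 < t
  · have hmem : ray m (s / a θ) θ t ∈ shell a m s ↔ t ∈ Icc (1 / 4 : ℝ) (7 / 4) := by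
      rw [shell, mem_ofPred_eq, ha.map_ray_div_rpow hm hs hθ ht]
    rw [indicator_of_mem (mem_Ioi.2 ht)]
    by_cases ht' : t ∈ Icc (1 / 4 : ℝ) (7 / 4)
    · rw [indicator_of_mem ht', indicator_of_mem (hmem.2 ht'), smul_eq_mul, mul_assoc]
    · rw [indicator_of_notMem ht', indicator_of_notMem (hmem.not.2 ht'), smul_zero]
  · rw [indicator_of_notMem (by simpa using ht),
      indicator_of_notMem fun h => ht (Icc_subset_Ioi_zero h)]

theorem integral_Ioi_cutoff_sq_mul_resolventSymbol_ray (ha : IsHomSymbol a) (hm : 0 < m)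
    (hs : 0 < s) (hθ : ‖θ‖ = 1) (κ β : ℝ) (F G : E → ℂ) :
    ∫ t in Ioi (0 : ℝ), (κ * t ^ β) • (fun ξ => (cutoff a m s ξ : ℂ) ^ 2 *
        resolventSymbol a m ζ ξ * F ξ * conj (G ξ)) (ray m (s / a θ) θ t)
      = ((κ * (s ^ m)⁻¹ : ℝ) : ℂ) * ∫ t : ℝ, (ζ / ((s ^ m : ℝ) : ℂ) - t)⁻¹ *
          (bump t • (t ^ β * √(1 + (t ^ (1 / m) * (s / a θ)) ^ 2) ^ (m - 1)) •
              F (ray m (s / a θ) θ t) *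
            conj (bump t • G (ray m (s / a θ) θ t))) := by
  have hθ0 : θ ≠ 0 := norm_pos_iff.1 (by rw [hθ]; exact one_pos)
  have hb : 0 ≤ s / a θ := div_nonneg hs.le (ha.nonneg θ)
  have hsm : ((s ^ m : ℝ) : ℂ) ≠ 0 := by exact_mod_cast (Real.rpow_pos_of_pos hs m).ne'
  rw [← integral_const_mul, ← integral_indicator measurableSet_Ioi]
  congr 1
  ext t
  by_cases ht : 0 < t
  · have hres : ζ - ((t * s ^ m : ℝ) : ℂ) = ((s ^ m : ℝ) : ℂ) * (ζ / ((s ^ m : ℝ) : ℂ) - t) := by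
      rw [mul_sub, mul_div_cancel₀ _ hsm]
      push_cast
      ring
    rw [indicator_of_mem (mem_Ioi.2 ht)]
    beta_reduce
    rw [cutoff, resolventSymbol, ha.map_ray_div_rpow hm hs hθ0 ht,
      ha.map_ray_rpow hm hs hθ0 ht, norm_ray hb hθ ht.le, hres, mul_inv]
    simp only [Complex.real_smul, map_mul, Complex.conj_ofReal]
    push_cast
    ring
  · rw [indicator_of_notMem (by simpa using ht),
      (bump_smul_eq_zero (φ := fun t => G (ray m (s / a θ) θ t))
        fun h => ht (Icc_subset_Ioi_zero h)).1]
    simp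

theorem integral_Ioi_indicator_shell_ray_nonneg (hκ : 0 ≤ κ) {D : E → ℝ} (hD : ∀ ξ, 0 ≤ D ξ) :
    0 ≤ ∫ t in Ioi (0 : ℝ), (κ * t ^ β) • (shell a m s).indicator D (ray m (s / a θ) θ t) :=
  setIntegral_nonneg measurableSet_Ioi fun _ ht => smul_nonneg
    (mul_nonneg hκ (Real.rpow_nonneg (le_of_lt ht) _)) (indicator_nonneg (fun ξ _ => hD ξ) _)

theorem exists_norm_integral_Ioi_ray_le [ProperSpace E] (ha : IsHomSymbol a) (hm : 1 ≤ m)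
    (hβ : 0 ≤ β) : ∃ K > 0, ∀ {ζ : ℂ} {s μ ν κ : ℝ} {θ : E} {F G : E → ℂ},
      ζ.im ≠ 0 → 0 < s → 1 ≤ μ → 1 ≤ ν → 0 ≤ κ → ‖θ‖ = 1 → ContDiff ℝ 1 F → ContDiff ℝ 1 G →
      ‖∫ t in Ioi (0 : ℝ), (κ * t ^ β) • (fun ξ => (cutoff a m s ξ : ℂ) ^ 2 *
          resolventSymbol a m ζ ξ * F ξ * conj (G ξ)) (ray m (s / a θ) θ t)‖
        ≤ K * (√(1 + s ^ 2) ^ (m - 1) * (s ^ m)⁻¹) *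
          (√(∫ t in Ioi (0 : ℝ), (κ * t ^ β) •
              (shell a m s).indicator (energyDensity s μ F) (ray m (s / a θ) θ t)) *
            √(∫ t in Ioi (0 : ℝ), (κ * t ^ β) •
              (shell a m s).indicator (energyDensity s ν G) (ray m (s / a θ) θ t))) := by
  have hm0 : 0 < m := by linarith
  obtain ⟨c, hc, _, -, hbound⟩ := ha.exists_bounds
  obtain ⟨K, hK, hrayK⟩ := exists_norm_integral_ray_le (E := E) hβ hm (inv_nonneg.2 hc.le)
  refine ⟨K, hK, fun {ζ s μ ν κ θ F G} hζ hs hμ hν hκ hθ hF hG => ?_⟩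
  have hθ0 : θ ≠ 0 := norm_pos_iff.1 (by rw [hθ]; exact one_pos)
  have hz : (ζ / ((s ^ m : ℝ) : ℂ)).im ≠ 0 := by
    rw [Complex.div_ofReal_im]
    exact div_ne_zero hζ (by positivity)
  have haθ : s / a θ ≤ c⁻¹ * s := by
    rw [div_eq_inv_mul]
    gcongr
    simpa [hθ] using (hbound θ).1
  rw [ha.integral_Ioi_cutoff_sq_mul_resolventSymbol_ray hm0 hs hθ,
    ha.integral_Ioi_indicator_shell_ray hm0 hs hθ0, ha.integral_Ioi_indicator_shell_ray hm0 hs hθ0,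
    norm_mul, Complex.norm_real, Real.norm_of_nonneg (by positivity), Real.sqrt_mul hκ,
    Real.sqrt_mul hκ]
  refine (mul_le_mul_of_nonneg_left (hrayK hz (div_nonneg hs.le (ha.nonneg θ)) haθ hμ hν hθ hF hG)
    (by positivity)).trans_eq ?_
  nth_rewrite 1 [← Real.mul_self_sqrt hκ]
  ring

theorem integrable_cutoff_sq_mul [ProperSpace E] [MeasurableSpace E] [BorelSpace E]
    {ρ : Measure E} [IsFiniteMeasureOnCompacts ρ] (ha : IsHomSymbol a) (hm : 1 ≤ m)
    (hs : 0 < s) (hζ : ζ.im ≠ 0) (hF : Continuous F) (hG : Continuous G) :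
    Integrable (fun ξ =>
      (cutoff a m s ξ : ℂ) ^ 2 * resolventSymbol a m ζ ξ * F ξ * conj (G ξ)) ρ := by
  have hm0 : 0 ≤ m := by linarith
  have hχ := continuous_cutoff (s := s) ha.continuous hm0
  have hq := continuous_resolventSymbol ha.continuous hm0 hζ
  refine Continuous.integrable_of_hasCompactSupport (by fun_prop)
    (HasCompactSupport.intro (ha.isCompact_shell hm hs) fun ξ hξ => ?_)
  rw [image_eq_zero_of_notMem_tsupport fun h => hξ (tsupport_cutoff_subset ha.continuous hm0 h)]
  simp

end IsHomSymbol

end Symbol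

section ShellEstimate

variable {n : ℕ} {a : EuclideanSpace ℝ (Fin n) → ℝ} {m : ℝ}

theorem IsHomSymbol.exists_norm_integral_cutoff_sq_mul_le (ha : IsHomSymbol a) (hm : 1 ≤ m)
    (hmn : m ≤ n) : ∃ K > 0, ∀ {ζ : ℂ} {s μ ν : ℝ} {F G : EuclideanSpace ℝ (Fin n) → ℂ},
      ζ.im ≠ 0 → 0 < s → 1 ≤ μ → 1 ≤ ν → ContDiff ℝ 1 F → ContDiff ℝ 1 G →
      ‖∫ ξ, (cutoff a m s ξ : ℂ) ^ 2 * resolventSymbol a m ζ ξ * F ξ * conj (G ξ)‖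
        ≤ K * (√(1 + s ^ 2) ^ (m - 1) * (s ^ m)⁻¹) *
          (√(shellEnergy a m s μ F) * √(shellEnergy a m s ν G)) := by
  have hm0 : 0 < m := by linarith
  have hn : n ≠ 0 := by rintro rfl; norm_num at hmn; linarith
  obtain ⟨K, hK, hrayK⟩ := ha.exists_norm_integral_Ioi_ray_le (β := n / m - 1) hm
    (by rw [sub_nonneg, one_le_div hm0]; exact hmn)
  refine ⟨K, hK, fun {ζ s μ ν F G} hζ hs hμ hν hF hG => ?_⟩
  have hb (θ : sphere (0 : EuclideanSpace ℝ (Fin n)) 1) : 0 < s / a θ :=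
    div_pos hs (ha.pos θ (ne_zero_of_mem_unit_sphere θ))
  have hshell := ha.isCompact_shell hm hs
  have hpolar {μ : ℝ} {F : EuclideanSpace ℝ (Fin n) → ℂ} (hF : ContDiff ℝ 1 F) :=
    integral_eq_integral_sphere_ray ((integrable_indicator_iff hshell.measurableSet).2
      ((continuous_energyDensity (s := s) (μ := μ) hF).continuousOn.integrableOn_compact
        hshell)) hn hm0 hb
  rw [(integral_eq_integral_sphere_ray (ha.integrable_cutoff_sq_mul hm hs hζ hF.continuous
      hG.continuous) hn hm0 hb).2, shellEnergy, shellEnergy,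
    ← integral_indicator hshell.measurableSet, ← integral_indicator hshell.measurableSet,
    (hpolar hF).2, (hpolar hG).2]
  have hκ θ : 0 ≤ m⁻¹ * (s / a θ) ^ n := by have := ha.nonneg θ; positivity
  refine norm_integral_le_of_norm_le_sqrt_mul_sqrt (hpolar hF).1 (hpolar hG).1
    (fun θ => integral_Ioi_indicator_shell_ray_nonneg (hκ θ) (energyDensity_nonneg (by linarith)))
    (fun θ => integral_Ioi_indicator_shell_ray_nonneg (hκ θ) (energyDensity_nonneg (by linarith)))
    (by positivity) (ae_of_all _ fun θ =>
      hrayK hζ hs hμ hν (hκ θ) (mem_sphere_zero_iff_norm.1 θ.2) hF hG)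

end ShellEstimate

section LayerCake

variable {E : Type*} [NormedAddCommGroup E] [MeasurableSpace E] {ρ : Measure E} {u : E → ℝ≥0∞}
  {c d : ℝ}

theorem lintegral_Ioi_rpow (hc : 0 < c) {r : ℝ} (hr : 0 < r) :
    ∫⁻ t in Ioi r, ENNReal.ofReal (t ^ (-c - 1)) = ENNReal.ofReal (c⁻¹ * r ^ (-c)) := by
  have hexp : -c - 1 < -1 := by linarith
  rw [← ofReal_integral_eq_lintegral_ofReal (integrableOn_Ioi_rpow_of_lt hexp hr)
    ((ae_restrict_mem measurableSet_Ioi).mono fun t ht => Real.rpow_nonneg (hr.trans ht).le _),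
    integral_Ioi_rpow_of_lt hexp hr, sub_add_cancel]
  congr 1
  field_simp

theorem lintegral_Ioc_rpow (hd : 0 < d) {r : ℝ} (hr : 0 < r) :
    ∫⁻ t in Ioc 0 r, ENNReal.ofReal (t ^ (d - 1)) = ENNReal.ofReal (d⁻¹ * r ^ d) := by
  have hexp : -1 < d - 1 := by linarith
  have hint := intervalIntegral.intervalIntegrable_rpow' (a := 0) (b := r) hexp
  rw [intervalIntegrable_iff_integrableOn_Ioc_of_le hr.le] at hint
  rw [← ofReal_integral_eq_lintegral_ofReal hint
    ((ae_restrict_mem measurableSet_Ioc).mono fun t ht => Real.rpow_nonneg ht.1.le _),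
    ← intervalIntegral.integral_of_le hr.le, integral_rpow (Or.inl hexp), sub_add_cancel,
    Real.zero_rpow hd.ne', sub_zero, div_eq_inv_mul]

theorem lintegral_mul_setLIntegral_swap {α β : Type*} [MeasurableSpace α] [MeasurableSpace β]
    {μ : Measure α} {ν : Measure β} [SFinite μ] [SFinite ν] {w : α → ℝ≥0∞} {u : β → ℝ≥0∞}
    (hw : Measurable w) (hu : Measurable u) {S : Set (α × β)} (hS : MeasurableSet S) :
    ∫⁻ t, w t * ∫⁻ x in {x | (t, x) ∈ S}, u x ∂ν ∂μ
      = ∫⁻ x, (∫⁻ t in {t | (t, x) ∈ S}, w t ∂μ) * u x ∂ν := by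
  have hleft t : w t * ∫⁻ x in {x | (t, x) ∈ S}, u x ∂ν
      = ∫⁻ x, S.indicator (fun p => w p.1 * u p.2) (t, x) ∂ν := by
    have hs : MeasurableSet {x | (t, x) ∈ S} := measurable_prodMk_left hS
    rw [← lintegral_const_mul _ hu, ← lintegral_indicator hs]
    rfl
  have hright x : (∫⁻ t in {t | (t, x) ∈ S}, w t ∂μ) * u x
      = ∫⁻ t, S.indicator (fun p => w p.1 * u p.2) (t, x) ∂μ := by
    have hs : MeasurableSet {t | (t, x) ∈ S} := measurable_prodMk_right hS
    rw [← lintegral_mul_const _ hw, ← lintegral_indicator hs]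
    rfl
  simp_rw [hleft, hright]
  exact lintegral_lintegral_swap
    (((hw.comp measurable_fst).mul (hu.comp measurable_snd)).indicator hS).aemeasurable

theorem measurable_ofReal_rpow : Measurable fun t : ℝ => ENNReal.ofReal (t ^ c) :=
  (measurable_id.pow_const c).ennreal_ofReal

theorem ae_norm_pos [NullSingletonClass ρ] : ∀ᵐ x ∂ρ, 0 < ‖x‖ := by
  filter_upwards [compl_mem_ae_iff.2 (measure_singleton (μ := ρ) (0 : E))] with x hx
  exact norm_pos_iff.2 hx

theorem measurable_setLIntegral_closedBall_inv (ρ : Measure E) (u : E → ℝ≥0∞) :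
    Measurable fun t : ℝ => ∫⁻ x in closedBall 0 t⁻¹, u x ∂ρ :=
  have hmono : Monotone fun r : ℝ => ∫⁻ x in closedBall 0 r, u x ∂ρ :=
    fun _ _ h => lintegral_mono_set (closedBall_subset_closedBall h)
  hmono.measurable.comp measurable_inv

variable [BorelSpace E]

theorem measurable_ofReal_norm_rpow : Measurable fun x : E => ENNReal.ofReal (‖x‖ ^ c) :=
  measurable_ofReal_rpow.comp measurable_norm

variable [SFinite ρ]

theorem lintegral_norm_rpow_neg_mul [NullSingletonClass ρ] (hc : 0 < c) (hu : Measurable u) :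
    ∫⁻ t in Ioi 0, ENNReal.ofReal (t ^ (-c - 1)) * ∫⁻ x in ball 0 t, u x ∂ρ
      = ENNReal.ofReal c⁻¹ * ∫⁻ x, ENNReal.ofReal (‖x‖ ^ (-c)) * u x ∂ρ := by
  have hS : MeasurableSet {p : ℝ × E | ‖p.2‖ < p.1} := measurableSet_lt (by fun_prop) (by fun_prop)
  have hball (t : ℝ) : ball (0 : E) t = {x | (t, x) ∈ {p : ℝ × E | ‖p.2‖ < p.1}} := by
    ext x
    simp
  simp_rw [hball]
  rw [lintegral_mul_setLIntegral_swap measurable_ofReal_rpow hu hS,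
    ← lintegral_const_mul' _ _ ENNReal.ofReal_ne_top]
  refine lintegral_congr_ae ?_
  filter_upwards [ae_norm_pos] with x hx
  change (∫⁻ t in Ioi ‖x‖, _ ∂_) * _ = _
  rw [Measure.restrict_restrict measurableSet_Ioi, inter_eq_left.2 (Ioi_subset_Ioi hx.le),
    lintegral_Ioi_rpow hc hx, ENNReal.ofReal_mul (by positivity), mul_assoc]

theorem lintegral_norm_rpow_neg_mul_closedBall_inv [NullSingletonClass ρ] (hd : 0 < d)
    (hu : Measurable u) :
    ∫⁻ t in Ioi 0, ENNReal.ofReal (t ^ (d - 1)) * ∫⁻ x in closedBall 0 t⁻¹, u x ∂ρ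
      = ENNReal.ofReal d⁻¹ * ∫⁻ x, ENNReal.ofReal (‖x‖ ^ (-d)) * u x ∂ρ := by
  have hS : MeasurableSet {p : ℝ × E | ‖p.2‖ ≤ p.1⁻¹} :=
    measurableSet_le (by fun_prop) (by fun_prop)
  have hball (t : ℝ) : closedBall (0 : E) t⁻¹ = {x | (t, x) ∈ {p : ℝ × E | ‖p.2‖ ≤ p.1⁻¹}} := by
    ext x
    simp
  simp_rw [hball]
  rw [lintegral_mul_setLIntegral_swap measurable_ofReal_rpow hu hS,
    ← lintegral_const_mul' _ _ ENNReal.ofReal_ne_top]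
  refine lintegral_congr_ae ?_
  filter_upwards [ae_norm_pos] with x hx
  have hmeas : MeasurableSet {t : ℝ | ‖x‖ ≤ t⁻¹} := measurable_prodMk_right hS
  have hIoc : {t : ℝ | ‖x‖ ≤ t⁻¹} ∩ Ioi 0 = Ioc 0 ‖x‖⁻¹ := by
    ext t
    simp only [mem_inter_iff, mem_ofPred_eq, mem_Ioi, mem_Ioc]
    exact ⟨fun h => ⟨h.2, (le_inv_comm₀ hx h.2).1 h.1⟩, fun h => ⟨(le_inv_comm₀ hx h.1).2 h.2, h.1⟩⟩
  rw [Measure.restrict_restrict hmeas, hIoc,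
    lintegral_Ioc_rpow hd (by positivity), ENNReal.ofReal_mul (by positivity), mul_assoc,
    Real.inv_rpow hx.le, Real.rpow_neg hx.le]

theorem lintegral_norm_rpow_mul_closedBall_inv [NullSingletonClass ρ] {b : ℝ} (hcb : c < b)
    (hu : Measurable u) :
    ∫⁻ t in Ioi 0, ENNReal.ofReal (t ^ (b - c - 1)) *
        ∫⁻ x in closedBall 0 t⁻¹, ENNReal.ofReal (‖x‖ ^ b) * u x ∂ρ
      = ENNReal.ofReal (b - c)⁻¹ * ∫⁻ x, ENNReal.ofReal (‖x‖ ^ c) * u x ∂ρ := by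
  rw [lintegral_norm_rpow_neg_mul_closedBall_inv (sub_pos.2 hcb)
    (measurable_ofReal_norm_rpow.fun_mul hu)]
  congr 1
  refine lintegral_congr_ae ?_
  filter_upwards [ae_norm_pos] with x hx
  rw [← mul_assoc, ← ENNReal.ofReal_mul (by positivity), ← Real.rpow_add hx, neg_sub,
    sub_add_cancel]

theorem lintegral_norm_rpow_mul_compl_closedBall_inv [NullSingletonClass ρ] (hc : 0 < c)
    (hu : Measurable u) :
    ∫⁻ t in Ioi 0, ENNReal.ofReal (t ^ (-c - 1)) * ∫⁻ x in (closedBall 0 t⁻¹)ᶜ, u x ∂ρ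
      = ENNReal.ofReal c⁻¹ * ∫⁻ x, ENNReal.ofReal (‖x‖ ^ c) * u x ∂ρ := by
  have hS : MeasurableSet {p : ℝ × E | p.1⁻¹ < ‖p.2‖} :=
    measurableSet_lt (by fun_prop) (by fun_prop)
  have hball (t : ℝ) : (closedBall (0 : E) t⁻¹)ᶜ = {x | (t, x) ∈ {p : ℝ × E | p.1⁻¹ < ‖p.2‖}} := by
    ext x
    simp
  simp_rw [hball]
  rw [lintegral_mul_setLIntegral_swap measurable_ofReal_rpow hu hS,
    ← lintegral_const_mul' _ _ ENNReal.ofReal_ne_top]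
  refine lintegral_congr_ae ?_
  filter_upwards [ae_norm_pos] with x hx
  have hmeas : MeasurableSet {t : ℝ | t⁻¹ < ‖x‖} := measurable_prodMk_right hS
  have hIoi : {t : ℝ | t⁻¹ < ‖x‖} ∩ Ioi 0 = Ioi ‖x‖⁻¹ := by
    ext t
    simp only [mem_inter_iff, mem_ofPred_eq, mem_Ioi]
    refine ⟨fun h => (inv_lt_comm₀ h.2 hx).1 h.1, fun h => ?_⟩
    have ht : 0 < t := (inv_pos.2 hx).trans h
    exact ⟨(inv_lt_comm₀ ht hx).2 h, ht⟩
  rw [Measure.restrict_restrict hmeas, hIoi,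
    lintegral_Ioi_rpow hc (by positivity), ENNReal.ofReal_mul (by positivity), mul_assoc,
    Real.inv_rpow hx.le, Real.rpow_neg hx.le, inv_inv]

end LayerCake

section Hardy

variable {n : ℕ} {b c r t : ℝ} {f : EuclideanSpace ℝ (Fin n) → ℂ}

theorem lintegral_mul_sq_le {α : Type*} [MeasurableSpace α] {μ : Measure α} {f g : α → ℝ≥0∞}
    (hf : AEMeasurable f μ) (hg : AEMeasurable g μ) :
    (∫⁻ x, f x * g x ∂μ) ^ 2 ≤ (∫⁻ x, f x ^ 2 ∂μ) * ∫⁻ x, g x ^ 2 ∂μ := by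
  have hsqrt (x : ℝ≥0∞) : (x ^ (1 / 2 : ℝ)) ^ 2 = x := by
    rw [← ENNReal.rpow_natCast, ← ENNReal.rpow_mul]
    norm_num
  have h := ENNReal.lintegral_mul_le_Lp_mul_Lq μ Real.HolderConjugate.two_two hf hg
  simp only [ENNReal.rpow_two] at h
  calc _ ≤ ((∫⁻ x, f x ^ 2 ∂μ) ^ (1 / 2 : ℝ) * (∫⁻ x, g x ^ 2 ∂μ) ^ (1 / 2 : ℝ)) ^ 2 := by
        gcongr
        exact h
    _ = _ := by rw [mul_pow, hsqrt, hsqrt]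

theorem enorm_add_sq_le (u v : ℂ) : ‖u + v‖ₑ ^ 2 ≤ 2 * (‖u‖ₑ ^ 2 + ‖v‖ₑ ^ 2) := by
  have h : ‖u + v‖₊ ^ 2 ≤ 2 * (‖u‖₊ ^ 2 + ‖v‖₊ ^ 2) :=
    (pow_le_pow_left' (nnnorm_add_le u v) 2).trans add_sq_le
  simp only [enorm_eq_nnnorm]
  exact_mod_cast h

theorem setLIntegral_closedBall_norm_rpow (hr : 0 < r) (c : ℝ) :
    ∫⁻ x in closedBall (0 : EuclideanSpace ℝ (Fin n)) r, ENNReal.ofReal (‖x‖ ^ c)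
      = ENNReal.ofReal (r ^ (n + c)) *
        ∫⁻ x in closedBall (0 : EuclideanSpace ℝ (Fin n)) 1, ENNReal.ofReal (‖x‖ ^ c) := by
  have hscale (x : EuclideanSpace ℝ (Fin n)) :
      (closedBall 0 r).indicator (fun x => ENNReal.ofReal (‖x‖ ^ c)) (r • x)
        = ENNReal.ofReal (r ^ c) *
          (closedBall 0 1).indicator (fun x => ENNReal.ofReal (‖x‖ ^ c)) x := by
    have hnorm : ‖r • x‖ = r * ‖x‖ := by rw [norm_smul, Real.norm_of_nonneg hr.le]
    have hmem : r • x ∈ closedBall 0 r ↔ x ∈ closedBall 0 1 := by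
      rw [mem_closedBall_zero_iff, mem_closedBall_zero_iff, hnorm, mul_le_iff_le_one_right hr]
    by_cases hx : x ∈ closedBall 0 1
    · rw [indicator_of_mem hx, indicator_of_mem (hmem.2 hx), hnorm,
        Real.mul_rpow hr.le (norm_nonneg x), ENNReal.ofReal_mul (by positivity)]
    · rw [indicator_of_notMem hx, indicator_of_notMem (hmem.not.2 hx), mul_zero]
  have h := lintegral_comp_smul ((closedBall (0 : EuclideanSpace ℝ (Fin n)) r).indicator
    fun x => ENNReal.ofReal (‖x‖ ^ c)) hr
  simp_rw [hscale] at h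
  rw [lintegral_const_mul' _ _ ENNReal.ofReal_ne_top,
    lintegral_indicator isClosed_closedBall.measurableSet,
    lintegral_indicator isClosed_closedBall.measurableSet] at h
  rw [add_comm, Real.rpow_add hr, Real.rpow_natCast, mul_comm (r ^ c),
    ENNReal.ofReal_mul (by positivity), mul_assoc, h, ← mul_assoc,
    ← ENNReal.ofReal_mul (by positivity), mul_inv_cancel₀ (by positivity), ENNReal.ofReal_one,
    one_mul]

theorem setLIntegral_closedBall_one_norm_rpow_neg_ne_top (hn : n ≠ 0) (hb : b < n) :
    ∫⁻ x in closedBall (0 : EuclideanSpace ℝ (Fin n)) 1, ENNReal.ofReal (‖x‖ ^ (-b)) ≠ ⊤ := by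
  have hint : IntegrableOn (fun x : EuclideanSpace ℝ (Fin n) => ‖x‖ ^ (-b)) (ball 0 2) := by
    refine integrableOn_ball_of_norm_le_rpow (C := 1) (α := b) ?_ ?_ (ae_of_all _ fun x => ?_)
      (measurable_norm.pow_const _).aestronglyMeasurable
    · rwa [finrank_euclideanSpace_fin, Nat.one_le_iff_ne_zero]
    · rwa [finrank_euclideanSpace_fin]
    · rw [one_mul, Real.norm_of_nonneg (by positivity)]
  rw [← ofReal_integral_eq_lintegral_ofReal
    (hint.mono_set (closedBall_subset_ball (by norm_num))) (ae_of_all _ fun x => by positivity)]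
  exact ENNReal.ofReal_ne_top

theorem exists_sq_setLIntegral_closedBall_enorm_le (hn : n ≠ 0) (hb : b < n) :
    ∃ C : ℝ≥0, ∀ {r : ℝ} {f : EuclideanSpace ℝ (Fin n) → ℂ}, 0 < r → Measurable f →
      (∫⁻ x in closedBall 0 r, ‖f x‖ₑ) ^ 2 ≤ C * ENNReal.ofReal (r ^ (n - b)) *
        ∫⁻ x in closedBall 0 r, ENNReal.ofReal (‖x‖ ^ b) * ‖f x‖ₑ ^ 2 := by
  have hC := ENNReal.coe_toNNReal (setLIntegral_closedBall_one_norm_rpow_neg_ne_top hn hb)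
  have : Nonempty (Fin n) := ⟨⟨0, Nat.pos_of_ne_zero hn⟩⟩
  refine ⟨(∫⁻ x in closedBall (0 : EuclideanSpace ℝ (Fin n)) 1,
    ENNReal.ofReal (‖x‖ ^ (-b))).toNNReal, fun {r f} hr hf => ?_⟩
  have hweight : ∫⁻ x in closedBall 0 r, ‖f x‖ₑ = ∫⁻ x in closedBall 0 r,
      ENNReal.ofReal (‖x‖ ^ (-b / 2)) * (ENNReal.ofReal (‖x‖ ^ (b / 2)) * ‖f x‖ₑ) := by
    refine lintegral_congr_ae (ae_restrict_of_ae ?_)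
    filter_upwards [ae_norm_pos] with x hx
    rw [← mul_assoc, ← ENNReal.ofReal_mul (by positivity), ← Real.rpow_add hx, neg_div,
      neg_add_cancel, Real.rpow_zero, ENNReal.ofReal_one, one_mul]
  have hsq (c : ℝ) (x : EuclideanSpace ℝ (Fin n)) :
      ENNReal.ofReal (‖x‖ ^ (c / 2)) ^ 2 = ENNReal.ofReal (‖x‖ ^ c) := by
    rw [← ENNReal.ofReal_pow (by positivity), ← Real.rpow_mul_natCast (norm_nonneg _)]
    norm_num
  rw [hweight]
  refine (lintegral_mul_sq_le measurable_ofReal_norm_rpow.aemeasurable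
    (measurable_ofReal_norm_rpow.fun_mul hf.enorm).aemeasurable).trans_eq ?_
  simp only [hsq]
  rw [setLIntegral_closedBall_norm_rpow hr, hC, ← sub_eq_add_neg, mul_comm (∫⁻ _ in _, _)]
  simp only [mul_pow, hsq]

theorem exists_setLIntegral_ball_enorm_sq_FT_indicator_le (hn : n ≠ 0) (hb : b < n) :
    ∃ C : ℝ≥0, ∀ {t : ℝ} {f : EuclideanSpace ℝ (Fin n) → ℂ}, 0 < t → Measurable f →
      ∫⁻ ξ in ball 0 t, ‖FT n ((closedBall 0 t⁻¹).indicator f) ξ‖ₑ ^ 2 ≤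
        C * (ENNReal.ofReal (t ^ b) *
          ∫⁻ x in closedBall 0 t⁻¹, ENNReal.ofReal (‖x‖ ^ b) * ‖f x‖ₑ ^ 2) := by
  obtain ⟨C, hC⟩ := exists_sq_setLIntegral_closedBall_enorm_le hn hb
  obtain ⟨V, hV⟩ : ∃ V : ℝ≥0, (V : ℝ≥0∞) = volume (ball (0 : EuclideanSpace ℝ (Fin n)) 1) :=
    ⟨_, ENNReal.coe_toNNReal measure_ball_lt_top.ne⟩
  refine ⟨C * V, fun {t f} ht hf => ?_⟩
  have hB : MeasurableSet (closedBall (0 : EuclideanSpace ℝ (Fin n)) t⁻¹) :=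
    isClosed_closedBall.measurableSet
  have hpow : ENNReal.ofReal (t⁻¹ ^ (n - b)) * ENNReal.ofReal (t ^ n) = ENNReal.ofReal (t ^ b) := by
    rw [← ENNReal.ofReal_mul (by positivity), Real.inv_rpow ht.le, ← Real.rpow_neg ht.le,
      ← Real.rpow_natCast, ← Real.rpow_add ht]
    ring_nf
  calc _ ≤ ∫⁻ ξ in ball (0 : EuclideanSpace ℝ (Fin n)) t,
        (∫⁻ x in closedBall 0 t⁻¹, ‖f x‖ₑ) ^ 2 := by
        gcongr with ξ
        simpa only [enorm_indicator_eq_indicator_enorm, lintegral_indicator hB]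
          using enorm_FT_le ((closedBall 0 t⁻¹).indicator f) ξ
    _ = (∫⁻ x in closedBall 0 t⁻¹, ‖f x‖ₑ) ^ 2 * (ENNReal.ofReal (t ^ n) * V) := by
        rw [setLIntegral_const, Measure.addHaar_ball_of_pos _ _ ht, finrank_euclideanSpace_fin, hV]
    _ ≤ _ := mul_le_mul_left (hC (inv_pos.2 ht) hf) _
    _ = _ := by
        rw [← hpow]
        push_cast
        ring

theorem exists_setLIntegral_ball_enorm_sq_FT_le (hn : n ≠ 0) (hb : b < n) :
    ∃ C : ℝ≥0, ∀ {t : ℝ} {f : EuclideanSpace ℝ (Fin n) → ℂ}, 0 < t → Measurable f →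
      Integrable f → MemLp f 2 → ∫⁻ ξ in ball 0 t, ‖FT n f ξ‖ₑ ^ 2 ≤
        C * (ENNReal.ofReal (t ^ b) *
          ∫⁻ x in closedBall 0 t⁻¹, ENNReal.ofReal (‖x‖ ^ b) * ‖f x‖ₑ ^ 2) +
        2 * ∫⁻ x in (closedBall 0 t⁻¹)ᶜ, ‖f x‖ₑ ^ 2 := by
  obtain ⟨C, hC⟩ := exists_setLIntegral_ball_enorm_sq_FT_indicator_le hn hb
  refine ⟨2 * C, fun {t f} ht hfm hf hf2 => ?_⟩
  have hB : MeasurableSet (closedBall (0 : EuclideanSpace ℝ (Fin n)) t⁻¹) :=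
    isClosed_closedBall.measurableSet
  set f₁ := (closedBall 0 t⁻¹).indicator f
  set f₂ := (closedBall 0 t⁻¹)ᶜ.indicator f
  have hsplit ξ : ‖FT n f ξ‖ₑ ^ 2 ≤ 2 * (‖FT n f₁ ξ‖ₑ ^ 2 + ‖FT n f₂ ξ‖ₑ ^ 2) := by
    conv_lhs => rw [← indicator_self_add_compl (closedBall 0 t⁻¹) f]
    exact (congrArg (‖·‖ₑ ^ 2) (FT_add (hf.indicator hB) (hf.indicator hB.compl) ξ)).trans_le
      (enorm_add_sq_le _ _)
  have hfar : ∫⁻ ξ in ball 0 t, ‖FT n f₂ ξ‖ₑ ^ 2 ≤ ∫⁻ x in (closedBall 0 t⁻¹)ᶜ, ‖f x‖ₑ ^ 2 := by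
    refine (setLIntegral_le_lintegral _ _).trans_eq ?_
    rw [lintegral_enorm_sq_FT_eq (hf.indicator hB.compl) (hf2.indicator hB.compl),
      ← lintegral_indicator hB.compl]
    congr 1
    ext x
    by_cases hx : x ∈ (closedBall (0 : EuclideanSpace ℝ (Fin n)) t⁻¹)ᶜ <;> simp [hx]
  calc _ ≤ ∫⁻ ξ in ball 0 t, 2 * (‖FT n f₁ ξ‖ₑ ^ 2 + ‖FT n f₂ ξ‖ₑ ^ 2) := lintegral_mono hsplit
    _ = 2 * ((∫⁻ ξ in ball 0 t, ‖FT n f₁ ξ‖ₑ ^ 2) + ∫⁻ ξ in ball 0 t, ‖FT n f₂ ξ‖ₑ ^ 2) := by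
        rw [lintegral_const_mul' _ _ ENNReal.ofNat_ne_top,
          lintegral_add_left ((continuous_FT (hf.indicator hB)).enorm.measurable.pow_const 2)]
    _ ≤ _ := mul_le_mul_right (add_le_add (hC ht hfm) hfar) _
    _ = _ := by
        push_cast
        ring

theorem exists_lintegral_norm_rpow_neg_mul_enorm_sq_FT_le_of_pos (hc : 0 < c) (hcn : c < n) :
    ∃ C : ℝ≥0, ∀ {f : EuclideanSpace ℝ (Fin n) → ℂ}, Measurable f → Integrable f → MemLp f 2 →
      ∫⁻ ξ, ENNReal.ofReal (‖ξ‖ ^ (-c)) * ‖FT n f ξ‖ₑ ^ 2 ≤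
        C * ∫⁻ x, ENNReal.ofReal (‖x‖ ^ c) * ‖f x‖ₑ ^ 2 := by
  have hn : n ≠ 0 := by rintro rfl; norm_num at hcn; linarith
  have : Nonempty (Fin n) := ⟨⟨0, Nat.pos_of_ne_zero hn⟩⟩
  obtain ⟨b, hcb, hbn⟩ := exists_between hcn
  obtain ⟨C, hC⟩ := exists_setLIntegral_ball_enorm_sq_FT_le hn hbn
  refine ⟨c.toNNReal * (C * (b - c)⁻¹.toNNReal + 2 * c⁻¹.toNNReal), fun {f} hfm hf hf2 => ?_⟩
  have hpow {t : ℝ} (ht : 0 < t) :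
      ENNReal.ofReal (t ^ (-c - 1)) * ENNReal.ofReal (t ^ b) =
        ENNReal.ofReal (t ^ (b - c - 1)) := by
    rw [← ENNReal.ofReal_mul (by positivity), ← Real.rpow_add ht]
    ring_nf
  have hu : Measurable fun x => ‖f x‖ₑ ^ 2 := hfm.enorm.pow_const 2
  calc ∫⁻ ξ, ENNReal.ofReal (‖ξ‖ ^ (-c)) * ‖FT n f ξ‖ₑ ^ 2
      = ENNReal.ofReal c * ∫⁻ t in Ioi 0, ENNReal.ofReal (t ^ (-c - 1)) *
          ∫⁻ ξ in ball 0 t, ‖FT n f ξ‖ₑ ^ 2 := by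
        rw [lintegral_norm_rpow_neg_mul hc ((continuous_FT hf).enorm.measurable.pow_const 2),
          ← mul_assoc, ← ENNReal.ofReal_mul hc.le, mul_inv_cancel₀ hc.ne', ENNReal.ofReal_one,
          one_mul]
    _ ≤ ENNReal.ofReal c * ∫⁻ t in Ioi 0,
          (C * (ENNReal.ofReal (t ^ (b - c - 1)) *
            ∫⁻ x in closedBall 0 t⁻¹, ENNReal.ofReal (‖x‖ ^ b) * ‖f x‖ₑ ^ 2) +
          2 * (ENNReal.ofReal (t ^ (-c - 1)) * ∫⁻ x in (closedBall 0 t⁻¹)ᶜ, ‖f x‖ₑ ^ 2)) := by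
        refine mul_le_mul_right (setLIntegral_mono' measurableSet_Ioi fun t ht => ?_) _
        refine (mul_le_mul_right (hC ht hfm hf hf2) _).trans_eq ?_
        rw [← hpow ht]
        ring
    _ = ENNReal.ofReal c * (C * (ENNReal.ofReal (b - c)⁻¹ *
            ∫⁻ x, ENNReal.ofReal (‖x‖ ^ c) * ‖f x‖ₑ ^ 2) +
          2 * (ENNReal.ofReal c⁻¹ * ∫⁻ x, ENNReal.ofReal (‖x‖ ^ c) * ‖f x‖ₑ ^ 2)) := by
        rw [← lintegral_norm_rpow_mul_closedBall_inv hcb hu,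
          ← lintegral_norm_rpow_mul_compl_closedBall_inv hc hu,
          ← lintegral_const_mul' _ _ ENNReal.coe_ne_top,
          ← lintegral_const_mul' _ _ ENNReal.ofNat_ne_top, ← lintegral_add_left
            ((measurable_ofReal_rpow.fun_mul
              (measurable_setLIntegral_closedBall_inv _ _)).const_mul _)]
    _ = _ := by
        simp only [ENNReal.ofReal]
        push_cast
        ring

theorem exists_lintegral_norm_rpow_neg_mul_enorm_sq_FT_le (hc : 0 ≤ c) (hcn : c < n) :
    ∃ C : ℝ≥0, ∀ {f : EuclideanSpace ℝ (Fin n) → ℂ}, Measurable f → Integrable f → MemLp f 2 →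
      ∫⁻ ξ, ENNReal.ofReal (‖ξ‖ ^ (-c)) * ‖FT n f ξ‖ₑ ^ 2 ≤
        C * ∫⁻ x, ENNReal.ofReal (‖x‖ ^ c) * ‖f x‖ₑ ^ 2 := by
  obtain rfl | hc := hc.eq_or_lt
  · refine ⟨1, fun _ hf hf2 => ?_⟩
    simp [lintegral_enorm_sq_FT_eq hf hf2]
  · exact exists_lintegral_norm_rpow_neg_mul_enorm_sq_FT_le_of_pos hc hcn

end Hardy

section ShellEnergy

variable {n : ℕ} {c m s R : ℝ} {a : EuclideanSpace ℝ (Fin n) → ℝ}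
  {f : EuclideanSpace ℝ (Fin n) → ℂ}

theorem exists_integral_norm_rpow_neg_mul_norm_sq_FT_le (hc : 0 ≤ c) (hcn : c < n) :
    ∃ C > 0, ∀ {f : EuclideanSpace ℝ (Fin n) → ℂ}, Measurable f → Integrable f → MemLp f 2 →
      Integrable (fun x => ‖x‖ ^ c * ‖f x‖ ^ 2) →
      Integrable (fun ξ => ‖ξ‖ ^ (-c) * ‖FT n f ξ‖ ^ 2) ∧
      ∫ ξ, ‖ξ‖ ^ (-c) * ‖FT n f ξ‖ ^ 2 ≤ C * ∫ x, ‖x‖ ^ c * ‖f x‖ ^ 2 := by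
  obtain ⟨C, hC⟩ := exists_lintegral_norm_rpow_neg_mul_enorm_sq_FT_le hc hcn
  refine ⟨C + 1, by positivity, fun {f} hfm hf hf2 hcf => ?_⟩
  have henorm (c : ℝ) (g : EuclideanSpace ℝ (Fin n) → ℂ) (x : EuclideanSpace ℝ (Fin n)) :
      ENNReal.ofReal (‖x‖ ^ c * ‖g x‖ ^ 2) = ENNReal.ofReal (‖x‖ ^ c) * ‖g x‖ₑ ^ 2 := by
    rw [ENNReal.ofReal_mul (by positivity), ENNReal.ofReal_pow (norm_nonneg _), ofReal_norm]
  have hnonneg (c : ℝ) (g : EuclideanSpace ℝ (Fin n) → ℂ) :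
      0 ≤ᵐ[volume] fun x => ‖x‖ ^ c * ‖g x‖ ^ 2 := ae_of_all _ fun x => by positivity
  have hmeas : AEStronglyMeasurable (fun ξ => ‖ξ‖ ^ (-c) * ‖FT n f ξ‖ ^ 2) :=
    ((measurable_norm.pow_const (-c)).mul
      ((continuous_FT hf).norm.pow 2).measurable).aestronglyMeasurable
  have hle : ∫⁻ ξ, ENNReal.ofReal (‖ξ‖ ^ (-c) * ‖FT n f ξ‖ ^ 2)
      ≤ ENNReal.ofReal (C * ∫ x, ‖x‖ ^ c * ‖f x‖ ^ 2) := by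
    rw [ENNReal.ofReal_mul C.coe_nonneg, ENNReal.ofReal_coe_nnreal,
      ofReal_integral_eq_lintegral_ofReal hcf (hnonneg c f)]
    simp_rw [henorm]
    exact hC hfm hf hf2
  refine ⟨⟨hmeas, (hasFiniteIntegral_iff_ofReal (hnonneg _ _)).2
    (hle.trans_lt ENNReal.ofReal_lt_top)⟩, ?_⟩
  rw [integral_eq_lintegral_of_nonneg_ae (hnonneg _ _) hmeas]
  exact (ENNReal.toReal_le_of_le_ofReal (by positivity) hle).trans (by gcongr; linarith)

theorem integrable_norm_rpow_mul_norm_sq (hc : 0 ≤ c) (hf2 : MemLp f 2)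
    (hR : ∀ x, R < ‖x‖ → f x = 0) : Integrable fun x => ‖x‖ ^ c * ‖f x‖ ^ 2 := by
  refine (hf2.integrable_norm_pow two_ne_zero).const_mul (R ^ c) |>.mono'
    ((measurable_norm.pow_const c).aestronglyMeasurable.mul (hf2.1.norm.pow 2))
    (ae_of_all _ fun x => ?_)
  rw [Real.norm_of_nonneg (by positivity)]
  by_cases hx : R < ‖x‖
  · simp [hR x hx]
  · gcongr
    exact not_lt.1 hx

theorem integrable_norm_mul_norm (hf : Integrable f) (hR : ∀ x, R < ‖x‖ → f x = 0) :
    Integrable fun x => ‖x‖ * ‖f x‖ := by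
  refine (hf.norm.const_mul R).mono'
    (measurable_norm.aestronglyMeasurable.mul hf.1.norm) (ae_of_all _ fun x => ?_)
  rw [Real.norm_of_nonneg (by positivity)]
  by_cases hx : R < ‖x‖
  · simp [hR x hx]
  · gcongr
    exact not_lt.1 hx

theorem memLp_coord_mul (hf2 : MemLp f 2) (hR : ∀ x, R < ‖x‖ → f x = 0) (j : Fin n) :
    MemLp (fun x => ((x j : ℝ) : ℂ) * f x) 2 := by
  refine (hf2.norm.const_mul R).mono' ((Continuous.aestronglyMeasurable (by fun_prop)).mul hf2.1)
    (ae_of_all _ fun x => ?_)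
  rw [norm_mul, Complex.norm_real]
  by_cases hx : R < ‖x‖
  · simp [hR x hx]
  · gcongr
    exact (PiLp.norm_apply_le x j).trans (not_lt.1 hx)

theorem integrable_norm_rpow_mul_norm_sq_coord_mul (hc : 0 ≤ c) (hf2 : MemLp f 2)
    (hR : ∀ x, R < ‖x‖ → f x = 0) (j : Fin n) :
    Integrable fun x => ‖x‖ ^ c * ‖((x j : ℝ) : ℂ) * f x‖ ^ 2 :=
  integrable_norm_rpow_mul_norm_sq (R := R) hc (memLp_coord_mul hf2 hR j) fun x hx => by
    rw [hR x hx, mul_zero]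

theorem exists_setIntegral_shell_norm_sq_FT_le (ha : IsHomSymbol a) (hm : 1 ≤ m) (hc : 0 ≤ c)
    (hcn : c < n) : ∃ K > 0, ∀ {s : ℝ} {f : EuclideanSpace ℝ (Fin n) → ℂ}, 0 < s →
      Measurable f → Integrable f → MemLp f 2 → Integrable (fun x => ‖x‖ ^ c * ‖f x‖ ^ 2) →
      ∫ ξ in shell a m s, ‖FT n f ξ‖ ^ 2 ≤ K * s ^ c * ∫ x, ‖x‖ ^ c * ‖f x‖ ^ 2 := by
  obtain ⟨C, hC, hHardy⟩ := exists_integral_norm_rpow_neg_mul_norm_sq_FT_le hc hcn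
  obtain ⟨k, hk, _, _, hbounds⟩ := ha.exists_bounds
  refine ⟨(2 / k) ^ c * C, by positivity, fun {s f} hs hfm hf hf2 hcf => ?_⟩
  obtain ⟨hint, hle⟩ := hHardy hfm hf hf2 hcf
  have hshell {ξ} (hξ : ξ ∈ shell a m s) : 1 ≤ (2 / k * s) ^ c * ‖ξ‖ ^ (-c) := by
    have hξ0 : 0 < ‖ξ‖ := norm_pos_iff.2 (ha.ne_zero_of_mem_shell (by linarith) hξ)
    have hξs : ‖ξ‖ ≤ 2 / k * s := by
      rw [div_mul_eq_mul_div, le_div_iff₀' hk]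
      exact norm_le_of_mem_shell (fun ξ => (hbounds ξ).1) hm hs hξ
    rw [Real.rpow_neg hξ0.le, ← div_eq_mul_inv, one_le_div (by positivity)]
    gcongr
  calc ∫ ξ in shell a m s, ‖FT n f ξ‖ ^ 2
      ≤ ∫ ξ in shell a m s, (2 / k * s) ^ c * (‖ξ‖ ^ (-c) * ‖FT n f ξ‖ ^ 2) :=
        setIntegral_mono_on
          (((continuous_FT hf).norm.pow 2).continuousOn.integrableOn_compact
            (ha.isCompact_shell hm hs)) (hint.const_mul _).integrableOn
          (ha.isCompact_shell hm hs).measurableSet fun ξ hξ => by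
            rw [← mul_assoc]
            exact le_mul_of_one_le_left (by positivity) (hshell hξ)
    _ ≤ ∫ ξ, (2 / k * s) ^ c * (‖ξ‖ ^ (-c) * ‖FT n f ξ‖ ^ 2) :=
        setIntegral_le_integral (hint.const_mul _) (ae_of_all _ fun ξ => by positivity)
    _ ≤ (2 / k * s) ^ c * (C * ∫ x, ‖x‖ ^ c * ‖f x‖ ^ 2) := by
        rw [integral_const_mul]
        gcongr
    _ = _ := by
        rw [Real.mul_rpow (by positivity) hs.le]
        ring

theorem sum_integral_coord_mul_le (hc : 0 ≤ c) (hf2 : MemLp f 2) (hR : ∀ x, R < ‖x‖ → f x = 0) :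
    ∑ j, ∫ x, ‖x‖ ^ c * ‖((x j : ℝ) : ℂ) * f x‖ ^ 2 ≤ R ^ 2 * ∫ x, ‖x‖ ^ c * ‖f x‖ ^ 2 := by
  have hint := integrable_norm_rpow_mul_norm_sq_coord_mul hc hf2 hR
  rw [← integral_finsetSum _ fun j _ => hint j, ← integral_const_mul]
  refine integral_mono (integrable_finsetSum _ fun j _ => hint j)
    ((integrable_norm_rpow_mul_norm_sq hc hf2 hR).const_mul _) fun x => ?_
  have hsum : ∑ j, ‖x‖ ^ c * ‖((x j : ℝ) : ℂ) * f x‖ ^ 2 = ‖x‖ ^ c * (‖x‖ ^ 2 * ‖f x‖ ^ 2) := by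
    rw [← Finset.mul_sum, EuclideanSpace.norm_sq_eq x, Finset.sum_mul]
    simp only [norm_mul, Complex.norm_real, mul_pow]
  rw [hsum]
  by_cases hx : R < ‖x‖
  · simp [hR x hx]
  · rw [mul_left_comm]
    gcongr
    exact not_lt.1 hx

theorem integrableOn_shell_norm_sq_FT (ha : IsHomSymbol a) (hm : 1 ≤ m) (hs : 0 < s)
    (hf : Integrable f) : IntegrableOn (fun ξ => ‖FT n f ξ‖ ^ 2) (shell a m s) :=
  ((continuous_FT hf).norm.pow 2).continuousOn.integrableOn_compact (ha.isCompact_shell hm hs)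

theorem integrableOn_shell_norm_sq_fderiv_FT (ha : IsHomSymbol a) (hm : 1 ≤ m) (hs : 0 < s)
    (hf : Integrable f) (hf1 : Integrable fun x => ‖x‖ * ‖f x‖) :
    IntegrableOn (fun ξ => ‖fderiv ℝ (FT n f) ξ‖ ^ 2) (shell a m s) :=
  (((contDiff_FT hf hf1).continuous_fderiv one_ne_zero).norm.pow 2).continuousOn
    |>.integrableOn_compact (ha.isCompact_shell hm hs)

theorem exists_setIntegral_shell_norm_sq_fderiv_FT_le (ha : IsHomSymbol a) (hm : 1 ≤ m)
    (hc : 0 ≤ c) (hcn : c < n) :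
    ∃ K > 0, ∀ {s R : ℝ} {f : EuclideanSpace ℝ (Fin n) → ℂ}, 0 < s → Measurable f →
      Integrable f → MemLp f 2 → (∀ x, R < ‖x‖ → f x = 0) →
      ∫ ξ in shell a m s, ‖fderiv ℝ (FT n f) ξ‖ ^ 2 ≤
        K * s ^ c * (R ^ 2 * ∫ x, ‖x‖ ^ c * ‖f x‖ ^ 2) := by
  obtain ⟨K, hK, hshell⟩ := exists_setIntegral_shell_norm_sq_FT_le ha hm hc hcn
  refine ⟨K, hK, fun {s R f} hs hfm hf hf2 hR => ?_⟩
  have hf1 := integrable_norm_mul_norm hf hR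
  have hint j := integrableOn_shell_norm_sq_FT ha hm hs (integrable_coord_mul hf hf1 j)
  calc ∫ ξ in shell a m s, ‖fderiv ℝ (FT n f) ξ‖ ^ 2
      ≤ ∫ ξ in shell a m s, ∑ j, ‖FT n (fun x => ((x j : ℝ) : ℂ) * f x) ξ‖ ^ 2 :=
        integral_mono (integrableOn_shell_norm_sq_fderiv_FT ha hm hs hf hf1)
          (integrable_finsetSum _ fun j _ => hint j) (norm_sq_fderiv_FT_le hf hf1)
    _ ≤ ∑ j, K * s ^ c * ∫ x, ‖x‖ ^ c * ‖((x j : ℝ) : ℂ) * f x‖ ^ 2 := by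
        rw [integral_finsetSum _ fun j _ => hint j]
        exact Finset.sum_le_sum fun j _ => hshell hs (by fun_prop)
          (integrable_coord_mul hf hf1 j) (memLp_coord_mul hf2 hR j)
          (integrable_norm_rpow_mul_norm_sq_coord_mul hc hf2 hR j)
    _ ≤ K * s ^ c * (R ^ 2 * ∫ x, ‖x‖ ^ c * ‖f x‖ ^ 2) := by
        rw [← Finset.mul_sum]
        gcongr
        exact sum_integral_coord_mul_le hc hf2 hR

/-- For `f` supported in `‖x‖ ≤ R` the parameter `μ = s R` balances `FT f` against its
derivative. -/
theorem exists_shellEnergy_FT_le (ha : IsHomSymbol a) (hm : 1 ≤ m) (hc : 0 ≤ c) (hcn : c < n) :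
    ∃ K > 0, ∀ {s R : ℝ} {f : EuclideanSpace ℝ (Fin n) → ℂ}, 0 < s → 0 < R → Measurable f →
      Integrable f → MemLp f 2 → (∀ x, R < ‖x‖ → f x = 0) →
      shellEnergy a m s (s * R) (FT n f) ≤ K * (s * R) * s ^ c * ∫ x, ‖x‖ ^ c * ‖f x‖ ^ 2 := by
  obtain ⟨K₁, hK₁, hvalue⟩ := exists_setIntegral_shell_norm_sq_FT_le ha hm hc hcn
  obtain ⟨K₂, hK₂, hderiv⟩ := exists_setIntegral_shell_norm_sq_fderiv_FT_le ha hm hc hcn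
  refine ⟨K₁ + K₂, by positivity, fun {s R f} hs hR0 hfm hf hf2 hR => ?_⟩
  simp only [shellEnergy, energyDensity]
  rw [integral_add ((integrableOn_shell_norm_sq_FT ha hm hs hf).const_mul _)
    ((integrableOn_shell_norm_sq_fderiv_FT ha hm hs hf
      (integrable_norm_mul_norm hf hR)).const_mul _), integral_const_mul, integral_const_mul]
  calc _ ≤ s * R * (K₁ * s ^ c * ∫ x, ‖x‖ ^ c * ‖f x‖ ^ 2) +
        (s * R)⁻¹ * s ^ 2 * (K₂ * s ^ c * (R ^ 2 * ∫ x, ‖x‖ ^ c * ‖f x‖ ^ 2)) := by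
        gcongr
        · exact hvalue hs hfm hf hf2 (integrable_norm_rpow_mul_norm_sq hc hf2 hR)
        · exact hderiv hs hfm hf hf2 hR
    _ = _ := by
        field_simp

end ShellEnergy

/-- The function `⟨x⟩ ^ (m / 2) f`. -/
def weighted {E : Type*} [Norm E] (m : ℝ) (f : E → ℂ) (x : E) : ℂ :=
  ((√(1 + ‖x‖ ^ 2) ^ (m / 2) : ℝ) : ℂ) * f x

/-- The weighted norm `‖⟨x⟩ ^ (m / 2) f‖` in `L²`, with junk value `0` when it is infinite. -/
def weightedNorm {E : Type*} [Norm E] [MeasureSpace E] (m : ℝ) (f : E → ℂ) : ℝ :=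
  (eLpNorm (weighted m f) 2).toReal

/-- The decomposition of the space into the ball of radius `X` and the annuli
`X 2 ^ k < ‖x‖ ≤ X 2 ^ (k + 1)`. -/
def dyadicAnnulus {E : Type*} [SeminormedAddCommGroup E] (X : ℝ) : ℕ → Set E :=
  disjointed fun k => closedBall 0 (X * 2 ^ k)

section DyadicAnnulus

variable {E : Type*} [SeminormedAddCommGroup E] {X : ℝ} {k : ℕ} {x : E}

theorem measurableSet_dyadicAnnulus [MeasurableSpace E] [OpensMeasurableSpace E] (X : ℝ) (k : ℕ) :
    MeasurableSet (dyadicAnnulus X k : Set E) :=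
  .disjointed (fun _ => measurableSet_closedBall) k

theorem norm_le_of_mem_dyadicAnnulus (hx : x ∈ dyadicAnnulus X k) : ‖x‖ ≤ X * 2 ^ k :=
  mem_closedBall_zero_iff.1 (disjointed_subset _ k hx)

theorem indicator_dyadicAnnulus_of_lt {f : E → ℂ} (hx : X * 2 ^ k < ‖x‖) :
    (dyadicAnnulus X k).indicator f x = 0 :=
  indicator_of_notMem (fun h => hx.not_ge (norm_le_of_mem_dyadicAnnulus h)) f

theorem lt_norm_of_mem_dyadicAnnulus_succ (hX : 0 ≤ X) (hx : x ∈ dyadicAnnulus X (k + 1)) :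
    X * 2 ^ k < ‖x‖ := by
  have hmono : Monotone fun k : ℕ => closedBall (0 : E) (X * 2 ^ k) := fun i j hij => by
    dsimp only
    gcongr
    norm_num
  rw [dyadicAnnulus, hmono.disjointed_add_one] at hx
  exact not_le.1 fun h => hx.2 (mem_closedBall_zero_iff.2 h)

theorem iUnion_dyadicAnnulus (hX : 0 < X) : ⋃ k, dyadicAnnulus X k = (univ : Set E) := by
  rw [dyadicAnnulus, iUnion_disjointed, eq_univ_iff_forall]
  intro x
  obtain ⟨k, hk⟩ := pow_unbounded_of_one_lt (‖x‖ / X) one_lt_two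
  refine mem_iUnion.2 ⟨k, mem_closedBall_zero_iff.2 ?_⟩
  rw [div_lt_iff₀' hX] at hk
  exact hk.le

end DyadicAnnulus

section WeightedNorm

variable {E : Type*} {m b : ℝ} {f : E → ℂ} {S : Set E}

theorem norm_weighted_sq [NormedAddCommGroup E] (m : ℝ) (f : E → ℂ) (x : E) :
    ‖weighted m f x‖ ^ 2 = √(1 + ‖x‖ ^ 2) ^ m * ‖f x‖ ^ 2 := by
  rw [weighted, norm_mul, Complex.norm_real, Real.norm_of_nonneg (by positivity), mul_pow,
    ← Real.rpow_mul_natCast (by positivity)]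
  congr 2
  push_cast
  ring

theorem weighted_indicator [Norm E] :
    weighted m (S.indicator f) = S.indicator (weighted m f) := by
  ext x
  by_cases hx : x ∈ S <;> simp [weighted, hx]

theorem norm_le_norm_weighted [NormedAddCommGroup E] (hm : 0 ≤ m) (x : E) :
    ‖f x‖ ≤ ‖weighted m f x‖ := by
  have hone : 1 ≤ √(1 + ‖x‖ ^ 2) := Real.one_le_sqrt.2 (by linarith [sq_nonneg ‖x‖])
  rw [weighted, norm_mul, Complex.norm_real, Real.norm_of_nonneg (by positivity)]
  exact le_mul_of_one_le_left (norm_nonneg _) (Real.one_le_rpow hone (by positivity))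

variable [MeasureSpace E]

theorem weightedNorm_nonneg [Norm E] : 0 ≤ weightedNorm m f := ENNReal.toReal_nonneg

theorem weightedNorm_indicator_le [Norm E] (hf : MemLp (weighted m f) 2) :
    weightedNorm m (S.indicator f) ≤ weightedNorm m f := by
  rw [weightedNorm, weighted_indicator]
  exact ENNReal.toReal_mono hf.eLpNorm_ne_top (eLpNorm_indicator_le _)

variable [NormedAddCommGroup E]

theorem memLp_of_memLp_weighted (hm : 0 ≤ m) (hfm : AEStronglyMeasurable f)
    (hf : MemLp (weighted m f) 2) : MemLp f 2 :=
  hf.of_le hfm (ae_of_all _ (norm_le_norm_weighted hm))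

theorem integral_mul_norm_sq_le_weightedNorm_sq {w : E → ℝ} (hf : MemLp (weighted m f) 2)
    (hw : ∀ x, 0 ≤ w x) (hle : ∀ x, f x ≠ 0 → w x ≤ b * √(1 + ‖x‖ ^ 2) ^ m) :
    ∫ x, w x * ‖f x‖ ^ 2 ≤ b * weightedNorm m f ^ 2 := by
  rw [weightedNorm, ← integral_norm_sq_eq_toReal_eLpNorm_sq hf.1, ← integral_const_mul]
  refine integral_mono_of_nonneg (ae_of_all _ fun x => mul_nonneg (hw x) (sq_nonneg _))
    (((memLp_two_iff_integrable_sq_norm hf.1).1 hf).const_mul b) (ae_of_all _ fun x => ?_)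
  dsimp only
  rw [norm_weighted_sq, ← mul_assoc]
  by_cases hx : f x = 0
  · simp [hx]
  · exact mul_le_mul_of_nonneg_right (hle x hx) (sq_nonneg _)

theorem integrable_norm_rpow_mul_norm_sq_of_weighted [OpensMeasurableSpace E] (hm : 0 ≤ m)
    (hfm : AEStronglyMeasurable f) (hf : MemLp (weighted m f) 2) :
    Integrable fun x => ‖x‖ ^ m * ‖f x‖ ^ 2 := by
  refine ((memLp_two_iff_integrable_sq_norm hf.1).1 hf).mono'
    (((measurable_norm.pow_const m).aestronglyMeasurable).mul (hfm.norm.pow 2))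
    (ae_of_all _ fun x => ?_)
  rw [norm_weighted_sq, Real.norm_of_nonneg (by positivity)]
  gcongr
  exact Real.le_sqrt_of_sq_le (by linarith)

end WeightedNorm

section DyadicSummation

variable {n : ℕ}

theorem integral_mul_FT_comm {F f : EuclideanSpace ℝ (Fin n) → ℂ} (hF : Integrable F)
    (hf : Integrable f) : ∫ ξ, F ξ * FT n f ξ = ∫ x, FT n F x * f x := by
  have hprod : Integrable (Function.uncurry fun ξ x : EuclideanSpace ℝ (Fin n) =>
      Complex.exp (-I * ((⟪x, ξ⟫ : ℝ) : ℂ)) * (F ξ * f x)) :=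
    (hF.mul_prod hf).bdd_mul (c := 1) (by fun_prop)
      (ae_of_all _ fun p => by simp [Complex.norm_exp])
  calc ∫ ξ, F ξ * FT n f ξ
      = ((2 * π) ^ (-(n : ℝ) / 2) : ℝ) * ∫ ξ, ∫ x,
          Complex.exp (-I * ((⟪x, ξ⟫ : ℝ) : ℂ)) * (F ξ * f x) := by
        rw [← integral_const_mul]
        congr 1
        ext ξ
        rw [FT, Complex.real_smul, mul_left_comm, ← integral_const_mul (F ξ)]
        congr! 3
        ring
    _ = ((2 * π) ^ (-(n : ℝ) / 2) : ℝ) * ∫ x, ∫ ξ,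
          Complex.exp (-I * ((⟪x, ξ⟫ : ℝ) : ℂ)) * (F ξ * f x) := by
        rw [integral_integral_swap hprod]
    _ = ∫ x, FT n F x * f x := by
        rw [← integral_const_mul]
        congr 1
        ext x
        rw [FT, Complex.real_smul, mul_assoc, ← integral_mul_const]
        simp only [mul_assoc, real_inner_comm x]

theorem norm_integral_mul_FT_le_of_geometric {F f : EuclideanSpace ℝ (Fin n) → ℂ}
    {S : ℕ → Set (EuclideanSpace ℝ (Fin n))} {A r : ℝ} (hF : Integrable F) (hf : Integrable f)
    (hS : ∀ k, MeasurableSet (S k)) (hdisj : Pairwise (Function.onFun Disjoint S))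
    (huniv : ⋃ k, S k = univ) (hr0 : 0 ≤ r) (hr1 : r < 1)
    (hA : ∀ k, ‖∫ ξ, F ξ * FT n ((S k).indicator f) ξ‖ ≤ A * r ^ k) :
    ‖∫ ξ, F ξ * FT n f ξ‖ ≤ A * (1 - r)⁻¹ := by
  have hint : Integrable fun x => FT n F x * f x :=
    hf.bdd_mul (continuous_FT hF).aestronglyMeasurable (ae_of_all _ (norm_FT_le hF))
  have hpiece k : ∫ x in S k, FT n F x * f x = ∫ ξ, F ξ * FT n ((S k).indicator f) ξ := by
    rw [integral_mul_FT_comm hF (hf.indicator (hS k)), ← integral_indicator (hS k)]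
    simp only [indicator_mul_right]
  have hsum := hasSum_integral_iUnion hS hdisj (f := fun x => FT n F x * f x) hint.integrableOn
  simp only [hpiece] at hsum
  rw [huniv, setIntegral_univ, ← integral_mul_FT_comm hF hf] at hsum
  exact hsum.norm_le_of_bounded ((hasSum_geometric_of_lt_one hr0 hr1).mul_left A) hA

end DyadicSummation

section DyadicEnergy

theorem one_le_mul_max_one_inv {s : ℝ} (hs : 0 < s) : 1 ≤ s * max 1 s⁻¹ := by
  rw [← mul_inv_cancel₀ hs.ne']
  gcongr
  exact le_max_right _ _

theorem sqrt_one_add_sq_le_two_mul_max {s : ℝ} (hs : 0 < s) :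
    √(1 + s ^ 2) ≤ 2 * (s * max 1 s⁻¹) := by
  have hone := one_le_mul_max_one_inv hs
  have hle : s ≤ s * max 1 s⁻¹ := le_mul_of_one_le_right hs.le (le_max_left _ _)
  refine Real.sqrt_le_iff.2 ⟨by positivity, ?_⟩
  nlinarith

theorem div_mul_two_pow_rpow {X : ℝ} (hX : X ≠ 0) (m : ℝ) (k : ℕ) :
    (X / (X * 2 ^ k)) ^ (m - 1) = ((2 : ℝ) ^ (1 - m)) ^ k := by
  rw [div_mul_cancel_left₀ hX, Real.inv_rpow (by positivity), ← Real.rpow_neg (by positivity),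
    neg_sub, ← Real.rpow_natCast_mul zero_le_two, ← Real.rpow_mul_natCast zero_le_two, mul_comm]

variable {n : ℕ} {a : EuclideanSpace ℝ (Fin n) → ℝ} {m : ℝ}

/-- Frequencies `s ≤ 1` and functions supported in `‖x‖ ≤ 1 / s`: the loss `s ^ (-m)` is recovered
from Hardy's inequality. -/
theorem exists_shellEnergy_FT_le_of_le_one (ha : IsHomSymbol a) (hm : 1 ≤ m) (hmn : m < n) :
    ∃ K > 0, ∀ {s : ℝ} {f : EuclideanSpace ℝ (Fin n) → ℂ}, 0 < s → s ≤ 1 → Measurable f →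
      Integrable f → MemLp (weighted m f) 2 → (∀ x, s⁻¹ < ‖x‖ → f x = 0) →
      √(1 + s ^ 2) ^ (m - 1) * (s ^ m)⁻¹ * shellEnergy a m s (s * s⁻¹) (FT n f) ≤
        K * weightedNorm m f ^ 2 := by
  have hm0 : 0 ≤ m := by linarith
  obtain ⟨K, hK, hshell⟩ := exists_shellEnergy_FT_le ha hm hm0 hmn
  refine ⟨√(1 + 1 ^ 2) ^ (m - 1) * K, by positivity, fun {s f} hs hs1 hfm hf hfw hR => ?_⟩
  have hweight : ∫ x, ‖x‖ ^ m * ‖f x‖ ^ 2 ≤ 1 * weightedNorm m f ^ 2 :=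
    integral_mul_norm_sq_le_weightedNorm_sq hfw (fun x => by positivity) fun x _ => by
      rw [one_mul]
      gcongr
      exact Real.le_sqrt_of_sq_le (by linarith)
  have henergy : shellEnergy a m s (s * s⁻¹) (FT n f) ≤
      K * (s * s⁻¹) * s ^ m * (1 * weightedNorm m f ^ 2) :=
    (hshell hs (inv_pos.2 hs) hfm hf
      (memLp_of_memLp_weighted hm0 hfm.aestronglyMeasurable hfw) hR).trans (by gcongr)
  calc √(1 + s ^ 2) ^ (m - 1) * (s ^ m)⁻¹ * shellEnergy a m s (s * s⁻¹) (FT n f)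
      ≤ √(1 + s ^ 2) ^ (m - 1) * (s ^ m)⁻¹ *
          (K * (s * s⁻¹) * s ^ m * (1 * weightedNorm m f ^ 2)) := by
        gcongr
    _ ≤ √(1 + 1 ^ 2) ^ (m - 1) * (s ^ m)⁻¹ *
          (K * (s * s⁻¹) * s ^ m * (1 * weightedNorm m f ^ 2)) := by
        have : 0 ≤ m - 1 := by linarith
        gcongr
    _ = _ := by
        field_simp

/-- Here Plancherel's theorem suffices, the decay in `R` coming from the weight alone. -/
theorem exists_shellEnergy_FT_le_of_le_norm (ha : IsHomSymbol a) (hm : 1 ≤ m) (hn : 0 < n) :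
    ∃ K > 0, ∀ {s R : ℝ} {f : EuclideanSpace ℝ (Fin n) → ℂ}, 0 < s → 0 < R → Measurable f →
      Integrable f → MemLp (weighted m f) 2 → (∀ x, R < ‖x‖ → f x = 0) →
      (∀ x, f x ≠ 0 → R ≤ 2 * √(1 + ‖x‖ ^ 2)) →
      √(1 + s ^ 2) ^ (m - 1) * (s ^ m)⁻¹ * shellEnergy a m s (s * R) (FT n f) ≤
        K * (max 1 s⁻¹ / R) ^ (m - 1) * weightedNorm m f ^ 2 := by
  have hm0 : 0 ≤ m := by linarith
  obtain ⟨K, hK, hshell⟩ := exists_shellEnergy_FT_le ha hm le_rfl (Nat.cast_pos.2 hn)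
  refine ⟨2 ^ (m - 1) * 2 ^ m * K, by positivity, fun {s R f} hs hR0 hfm hf hfw hR hfR => ?_⟩
  have hweight : ∫ x, ‖x‖ ^ (0 : ℝ) * ‖f x‖ ^ 2 ≤ (2 / R) ^ m * weightedNorm m f ^ 2 :=
    integral_mul_norm_sq_le_weightedNorm_sq hfw (fun x => by positivity) fun x hx => by
      rw [Real.rpow_zero, ← Real.mul_rpow (by positivity) (by positivity), div_mul_eq_mul_div]
      exact Real.one_le_rpow ((one_le_div hR0).2 (hfR x hx)) hm0
  have henergy : shellEnergy a m s (s * R) (FT n f) ≤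
      K * (s * R) * s ^ (0 : ℝ) * ((2 / R) ^ m * weightedNorm m f ^ 2) :=
    (hshell hs hR0 hfm hf
      (memLp_of_memLp_weighted hm0 hfm.aestronglyMeasurable hfw) hR).trans (by gcongr)
  have hX : 0 < max 1 s⁻¹ := by positivity
  have hsX := sqrt_one_add_sq_le_two_mul_max hs
  set X := max 1 s⁻¹
  calc √(1 + s ^ 2) ^ (m - 1) * (s ^ m)⁻¹ * shellEnergy a m s (s * R) (FT n f)
      ≤ √(1 + s ^ 2) ^ (m - 1) * (s ^ m)⁻¹ *
          (K * (s * R) * s ^ (0 : ℝ) * ((2 / R) ^ m * weightedNorm m f ^ 2)) := by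
        gcongr
    _ ≤ (2 * (s * X)) ^ (m - 1) * (s ^ m)⁻¹ *
          (K * (s * R) * s ^ (0 : ℝ) * ((2 / R) ^ m * weightedNorm m f ^ 2)) := by
        have : 0 ≤ m - 1 := by linarith
        gcongr
    _ = _ := by
        rw [Real.mul_rpow zero_le_two (by positivity), Real.mul_rpow hs.le hX.le,
          Real.div_rpow zero_le_two hR0.le, Real.div_rpow hX.le hR0.le, Real.rpow_sub_one hs.ne',
          Real.rpow_sub_one hR0.ne', Real.rpow_zero]
        field_simp

theorem exists_shellEnergy_FT_indicator_dyadicAnnulus_le (ha : IsHomSymbol a) (hm : 1 ≤ m)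
    (hmn : m < n) :
    ∃ K > 0, ∀ {s X : ℝ} {f : EuclideanSpace ℝ (Fin n) → ℂ} (k : ℕ), 0 < s → X = max 1 s⁻¹ →
      Measurable f → Integrable f → MemLp (weighted m f) 2 →
      √(1 + s ^ 2) ^ (m - 1) * (s ^ m)⁻¹ *
          shellEnergy a m s (s * (X * 2 ^ k)) (FT n ((dyadicAnnulus X k).indicator f)) ≤
        K * (2 ^ (1 - m)) ^ k * weightedNorm m f ^ 2 := by
  have hn : 0 < n := by exact_mod_cast (by linarith : (0 : ℝ) < n)
  obtain ⟨K₁, hK₁, hlow⟩ := exists_shellEnergy_FT_le_of_le_one ha hm hmn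
  obtain ⟨K₂, hK₂, hhigh⟩ := exists_shellEnergy_FT_le_of_le_norm ha hm hn
  refine ⟨max K₁ K₂, by positivity, fun {s X f} k hs hX hfm hf hfw => ?_⟩
  have hX0 : 0 < X := hX ▸ by positivity
  have hSk := measurableSet_dyadicAnnulus (E := EuclideanSpace ℝ (Fin n)) X k
  have hfm' := hfm.indicator hSk
  have hf' := hf.indicator hSk
  have hfw' : MemLp (weighted m ((dyadicAnnulus X k).indicator f)) 2 := by
    rw [weighted_indicator]
    exact hfw.indicator hSk
  have hnorm := pow_le_pow_left₀ weightedNorm_nonneg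
    (weightedNorm_indicator_le (S := dyadicAnnulus X k) hfw) 2
  have hR x (hx : X * 2 ^ k < ‖x‖) : (dyadicAnnulus X k).indicator f x = 0 :=
    indicator_dyadicAnnulus_of_lt hx
  by_cases hlowcase : k = 0 ∧ s ≤ 1
  · obtain ⟨rfl, hs1⟩ := hlowcase
    obtain rfl : X = s⁻¹ := by rw [hX, max_eq_right ((one_le_inv₀ hs).2 hs1)]
    simp only [pow_zero, mul_one] at hR ⊢
    exact (hlow hs hs1 hfm' hf' hfw' hR).trans (by gcongr; exact le_max_left _ _)
  · have hfR x (hx : (dyadicAnnulus X k).indicator f x ≠ 0) :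
        X * 2 ^ k ≤ 2 * √(1 + ‖x‖ ^ 2) := by
      have hnorm : ‖x‖ ≤ √(1 + ‖x‖ ^ 2) := Real.le_sqrt_of_sq_le (by linarith)
      have hone : 1 ≤ √(1 + ‖x‖ ^ 2) := Real.one_le_sqrt.2 (by linarith [sq_nonneg ‖x‖])
      rcases k with _ | k
      · have hs1 : 1 < s := by simpa using hlowcase
        rw [hX, max_eq_left (inv_le_one_of_one_le₀ hs1.le)]
        linarith
      · have := lt_norm_of_mem_dyadicAnnulus_succ hX0.le (mem_of_indicator_ne_zero hx)
        rw [pow_succ]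
        linarith
    refine (hhigh hs (by positivity) hfm' hf' hfw' hR hfR).trans ?_
    rw [← hX, div_mul_two_pow_rpow hX0.ne']
    gcongr
    exact le_max_right _ _

end DyadicEnergy

section Singular

variable {n : ℕ}

theorem norm_integral_mul_FT_mul_conj_FT_le_of_geometric {Q f g : EuclideanSpace ℝ (Fin n) → ℂ}
    {S : ℕ → Set (EuclideanSpace ℝ (Fin n))} {A r : ℝ} (hQ : Integrable Q) (hf : Integrable f)
    (hg : Integrable g) (hS : ∀ k, MeasurableSet (S k))
    (hdisj : Pairwise (Function.onFun Disjoint S)) (huniv : ⋃ k, S k = univ) (hr0 : 0 ≤ r)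
    (hr1 : r < 1) (hA : ∀ j k, ‖∫ ξ, Q ξ * FT n ((S j).indicator f) ξ *
      conj (FT n ((S k).indicator g) ξ)‖ ≤ A * r ^ j * r ^ k) :
    ‖∫ ξ, Q ξ * FT n f ξ * conj (FT n g ξ)‖ ≤ A * (1 - r)⁻¹ * (1 - r)⁻¹ := by
  have hswap {G H : EuclideanSpace ℝ (Fin n) → ℂ} :
      ‖∫ ξ, conj (Q ξ * G ξ) * H ξ‖ = ‖∫ ξ, Q ξ * G ξ * conj (H ξ)‖ := by
    rw [← RCLike.norm_conj, ← integral_conj]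
    simp only [map_mul, Complex.conj_conj]
  have hQconj {h : EuclideanSpace ℝ (Fin n) → ℂ} (hh : Integrable h) :
      Integrable fun ξ => Q ξ * conj (FT n h ξ) :=
    hQ.mul_bdd (Complex.continuous_conj.comp (continuous_FT hh)).aestronglyMeasurable
      (ae_of_all _ fun ξ => (RCLike.norm_conj _).trans_le (norm_FT_le hh ξ))
  have hQFT : Integrable fun ξ => conj (Q ξ * FT n f ξ) :=
    integrable_conj (hQ.mul_bdd (continuous_FT hf).aestronglyMeasurable
      (ae_of_all _ (norm_FT_le hf)))
  rw [← hswap]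
  refine norm_integral_mul_FT_le_of_geometric hQFT hg hS hdisj huniv hr0 hr1 fun k => ?_
  rw [hswap]
  simp only [mul_right_comm _ (FT n f _)]
  calc _ ≤ A * r ^ k * (1 - r)⁻¹ :=
        norm_integral_mul_FT_le_of_geometric (hQconj (hg.indicator (hS k))) hf hS hdisj huniv hr0
          hr1 fun j => by
            simp only [mul_right_comm _ (conj _)]
            exact (hA j k).trans_eq (mul_right_comm _ _ _)
    _ = A * (1 - r)⁻¹ * r ^ k := mul_right_comm _ _ _

variable {a : EuclideanSpace ℝ (Fin n) → ℝ} {m : ℝ}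

theorem contDiff_FT_indicator_dyadicAnnulus {f : EuclideanSpace ℝ (Fin n) → ℂ}
    (hf : Integrable f) (X : ℝ) (k : ℕ) :
    ContDiff ℝ 1 (FT n ((dyadicAnnulus X k).indicator f)) := by
  have hfk := hf.indicator (measurableSet_dyadicAnnulus X k)
  exact contDiff_FT hfk (integrable_norm_mul_norm hfk fun _ => indicator_dyadicAnnulus_of_lt)

theorem exists_norm_integral_cutoff_sq_mul_FT_indicator_le (ha : IsHomSymbol a) (hm : 1 ≤ m)
    (hmn : m < n) :
    ∃ K > 0, ∀ {ζ : ℂ} {s X : ℝ} {f g : EuclideanSpace ℝ (Fin n) → ℂ} (j k : ℕ), ζ.im ≠ 0 →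
      0 < s → X = max 1 s⁻¹ → Measurable f → Integrable f → MemLp (weighted m f) 2 →
      Measurable g → Integrable g → MemLp (weighted m g) 2 →
      ‖∫ ξ, (cutoff a m s ξ : ℂ) ^ 2 * resolventSymbol a m ζ ξ *
          FT n ((dyadicAnnulus X j).indicator f) ξ *
          conj (FT n ((dyadicAnnulus X k).indicator g) ξ)‖ ≤
        K * weightedNorm m f * weightedNorm m g * √(2 ^ (1 - m)) ^ j * √(2 ^ (1 - m)) ^ k := by
  obtain ⟨K₁, hK₁, hpair⟩ := ha.exists_norm_integral_cutoff_sq_mul_le hm hmn.le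
  obtain ⟨K₂, hK₂, hpiece⟩ := exists_shellEnergy_FT_indicator_dyadicAnnulus_le ha hm hmn
  refine ⟨K₁ * (√K₂ * √K₂), by positivity,
    fun {ζ s X f g} j k hζ hs hX hfm hf hfw hgm hg hgw => ?_⟩
  have hsX : 1 ≤ s * X := hX ▸ one_le_mul_max_one_inv hs
  have hμ (i : ℕ) : 1 ≤ s * (X * 2 ^ i) := by
    rw [← mul_assoc]
    exact one_le_mul_of_one_le_of_one_le hsX (one_le_pow₀ one_le_two)
  set L := √(1 + s ^ 2) ^ (m - 1) * (s ^ m)⁻¹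
  have hL : 0 ≤ L := by positivity
  have hsqrt {h : EuclideanSpace ℝ (Fin n) → ℂ} (i : ℕ) (hhm : Measurable h) (hh : Integrable h)
      (hhw : MemLp (weighted m h) 2) :
      √L * √(shellEnergy a m s (s * (X * 2 ^ i)) (FT n ((dyadicAnnulus X i).indicator h))) ≤
        √K₂ * √(2 ^ (1 - m)) ^ i * weightedNorm m h := by
    rw [← Real.sqrt_mul hL]
    refine Real.sqrt_le_iff.2 ⟨mul_nonneg (by positivity) weightedNorm_nonneg, ?_⟩
    rw [mul_pow, mul_pow, Real.sq_sqrt hK₂.le, pow_right_comm, Real.sq_sqrt (by positivity)]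
    exact hpiece i hs hX hhm hh hhw
  calc _ ≤ K₁ * L * (√(shellEnergy a m s (s * (X * 2 ^ j))
          (FT n ((dyadicAnnulus X j).indicator f))) * √(shellEnergy a m s (s * (X * 2 ^ k))
          (FT n ((dyadicAnnulus X k).indicator g)))) :=
        hpair hζ hs (hμ j) (hμ k) (contDiff_FT_indicator_dyadicAnnulus hf X j)
          (contDiff_FT_indicator_dyadicAnnulus hg X k)
    _ = K₁ * ((√L * √(shellEnergy a m s (s * (X * 2 ^ j))
          (FT n ((dyadicAnnulus X j).indicator f)))) *
        (√L * √(shellEnergy a m s (s * (X * 2 ^ k))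
          (FT n ((dyadicAnnulus X k).indicator g))))) := by
        rw [mul_mul_mul_comm √L, Real.mul_self_sqrt hL, mul_assoc]
    _ ≤ K₁ * ((√K₂ * √(2 ^ (1 - m)) ^ j * weightedNorm m f) *
        (√K₂ * √(2 ^ (1 - m)) ^ k * weightedNorm m g)) :=
        mul_le_mul_of_nonneg_left (mul_le_mul (hsqrt j hfm hf hfw) (hsqrt k hgm hg hgw)
          (by positivity) (mul_nonneg (by positivity) weightedNorm_nonneg)) hK₁.le
    _ = _ := by
        ring

theorem exists_norm_integral_cutoff_sq_mul_FT_le (ha : IsHomSymbol a) (hm : 1 < m) (hmn : m < n) :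
    ∃ K > 0, ∀ {ζ : ℂ} {s : ℝ} {f g : EuclideanSpace ℝ (Fin n) → ℂ}, ζ.im ≠ 0 → 0 < s →
      Measurable f → Integrable f → MemLp (weighted m f) 2 →
      Measurable g → Integrable g → MemLp (weighted m g) 2 →
      ‖∫ ξ, (cutoff a m s ξ : ℂ) ^ 2 * resolventSymbol a m ζ ξ * FT n f ξ * conj (FT n g ξ)‖ ≤
        K * weightedNorm m f * weightedNorm m g := by
  obtain ⟨K, hK, hpiece⟩ := exists_norm_integral_cutoff_sq_mul_FT_indicator_le ha hm.le hmn
  have hr : √((2 : ℝ) ^ (1 - m)) < 1 :=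
    (Real.sqrt_lt' one_pos).2 <| by
      rw [one_pow]
      exact Real.rpow_lt_one_of_one_lt_of_neg one_lt_two (by linarith)
  have : 0 < 1 - √((2 : ℝ) ^ (1 - m)) := by linarith
  refine ⟨K * (1 - √(2 ^ (1 - m)))⁻¹ * (1 - √(2 ^ (1 - m)))⁻¹, by positivity,
    fun {ζ s f g} hζ hs hfm hf hfw hgm hg hgw => ?_⟩
  have hQ := ha.integrable_cutoff_sq_mul (ρ := volume) (F := 1) (G := 1) hm.le hs hζ
    continuous_one continuous_one
  simp only [Pi.one_apply, map_one, mul_one] at hQ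
  refine (norm_integral_mul_FT_mul_conj_FT_le_of_geometric hQ hf hg
    (measurableSet_dyadicAnnulus (max 1 s⁻¹)) (disjoint_disjointed _)
    (iUnion_dyadicAnnulus (by positivity)) (Real.sqrt_nonneg _) hr fun j k =>
      hpiece j k hζ hs rfl hfm hf hfw hgm hg hgw).trans_eq ?_
  ring

end Singular

section Regular

theorem sqrt_one_add_sq_rpow_sub_one_le {m r : ℝ} (hm : 0 ≤ m) (hr : 0 ≤ r) :
    √(1 + r ^ 2) ^ (m - 1) ≤ 2 ^ m * (1 + r ^ m) := by
  have hone : 1 ≤ √(1 + r ^ 2) := Real.one_le_sqrt.2 (by linarith [sq_nonneg r])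
  have hle : √(1 + r ^ 2) ≤ 2 * max 1 r := by
    refine Real.sqrt_le_iff.2 ⟨by positivity, ?_⟩
    nlinarith [le_max_left 1 r, le_max_right 1 r]
  calc √(1 + r ^ 2) ^ (m - 1) ≤ √(1 + r ^ 2) ^ m :=
        Real.rpow_le_rpow_of_exponent_le hone (by linarith)
    _ ≤ (2 * max 1 r) ^ m := by gcongr
    _ = 2 ^ m * max 1 (r ^ m) := by
        rw [Real.mul_rpow zero_le_two (by positivity),
          (Real.monotoneOn_rpow_Ici_of_exponent_nonneg hm).map_max (by simp) hr, Real.one_rpow]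
    _ ≤ 2 ^ m * (1 + r ^ m) := by
        gcongr
        exact max_le_add_of_nonneg zero_le_one (by positivity)

variable {E : Type*} [NormedAddCommGroup E] [NormedSpace ℝ E] {a : E → ℝ} {m s : ℝ} {ξ : E}

theorem IsHomSymbol.rpow_le_of_cutoff_ne_one (ha : IsHomSymbol a) (hs : 0 < s)
    (hξ : cutoff a m s ξ ≠ 1) : a ξ ^ m ≤ 3 * |s ^ m - a ξ ^ m| := by
  have hfar : 1 / 2 < |1 - (a ξ / s) ^ m| := by
    by_contra! h
    refine hξ (bump.one_of_mem_closedBall ?_)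
    rwa [mem_closedBall, dist_comm, Real.dist_eq]
  have hdist : (a ξ / s) ^ m ≤ 3 * |1 - (a ξ / s) ^ m| := by
    rcases lt_abs.1 hfar with h | h
    · linarith [le_abs_self (1 - (a ξ / s) ^ m)]
    · linarith [neg_abs_le (1 - (a ξ / s) ^ m)]
  have hsm : 0 < s ^ m := by positivity
  rw [Real.div_rpow (ha.nonneg ξ) hs.le, one_sub_div hsm.ne', abs_div, abs_of_pos hsm,
    ← mul_div_assoc] at hdist
  exact (div_le_div_iff_of_pos_right hsm).1 hdist

theorem IsHomSymbol.exists_norm_resolventSymbol_le [ProperSpace E] (ha : IsHomSymbol a)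
    (hm : 0 ≤ m) :
    ∃ K > 0, ∀ {ζ : ℂ} {ξ : E}, ξ ≠ 0 → a ξ ^ m ≤ 3 * |ζ.re - a ξ ^ m| →
      ‖resolventSymbol a m ζ ξ‖ ≤ K * (1 + ‖ξ‖ ^ (-m)) := by
  obtain ⟨c, hc, _, _, hbounds⟩ := ha.exists_bounds
  refine ⟨2 ^ m * (3 * (c ^ m)⁻¹), by positivity, fun {ζ ξ} hξ0 hζ => ?_⟩
  have hξ : 0 < ‖ξ‖ := norm_pos_iff.2 hξ0
  have hlower : (3 * (c ^ m)⁻¹ * ‖ξ‖ ^ (-m))⁻¹ ≤ ‖ζ - ((a ξ ^ m : ℝ) : ℂ)‖ :=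
    calc (3 * (c ^ m)⁻¹ * ‖ξ‖ ^ (-m))⁻¹ = (c * ‖ξ‖) ^ m / 3 := by
          rw [Real.rpow_neg hξ.le, Real.mul_rpow hc.le hξ.le]
          field_simp
      _ ≤ a ξ ^ m / 3 := by
          gcongr
          exact (hbounds ξ).1
      _ ≤ |ζ.re - a ξ ^ m| := by linarith
      _ ≤ ‖ζ - ((a ξ ^ m : ℝ) : ℂ)‖ := by
          simpa using Complex.abs_re_le_norm (ζ - ((a ξ ^ m : ℝ) : ℂ))
  rw [resolventSymbol, norm_mul, norm_inv, Complex.norm_real, Real.norm_of_nonneg (by positivity)]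
  calc √(1 + ‖ξ‖ ^ 2) ^ (m - 1) * ‖ζ - ((a ξ ^ m : ℝ) : ℂ)‖⁻¹
      ≤ 2 ^ m * (1 + ‖ξ‖ ^ m) * (3 * (c ^ m)⁻¹ * ‖ξ‖ ^ (-m)) := by
        gcongr
        · exact sqrt_one_add_sq_rpow_sub_one_le hm hξ.le
        · exact inv_le_of_inv_le₀ (by positivity) hlower
    _ = 2 ^ m * (3 * (c ^ m)⁻¹) * (1 + ‖ξ‖ ^ (-m)) := by
        rw [Real.rpow_neg hξ.le]
        field_simp
        ring

variable {n : ℕ}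

theorem exists_integral_one_add_norm_rpow_neg_mul_norm_sq_FT_le (hm : 0 ≤ m) (hmn : m < n) :
    ∃ C > 0, ∀ {f : EuclideanSpace ℝ (Fin n) → ℂ}, Measurable f → Integrable f →
      MemLp (weighted m f) 2 →
      Integrable (fun ξ => (1 + ‖ξ‖ ^ (-m)) * ‖FT n f ξ‖ ^ 2) ∧
        ∫ ξ, (1 + ‖ξ‖ ^ (-m)) * ‖FT n f ξ‖ ^ 2 ≤ C * weightedNorm m f ^ 2 := by
  obtain ⟨C₀, hC₀, hPlancherel⟩ :=
    exists_integral_norm_rpow_neg_mul_norm_sq_FT_le le_rfl (hm.trans_lt hmn)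
  obtain ⟨C₁, hC₁, hHardy⟩ := exists_integral_norm_rpow_neg_mul_norm_sq_FT_le hm hmn
  refine ⟨C₀ + C₁, by positivity, fun {f} hfm hf hfw => ?_⟩
  have hf2 := memLp_of_memLp_weighted hm hfm.aestronglyMeasurable hfw
  have hone (x : EuclideanSpace ℝ (Fin n)) : 1 ≤ √(1 + ‖x‖ ^ 2) :=
    Real.one_le_sqrt.2 (by linarith [sq_nonneg ‖x‖])
  obtain ⟨hint₀, hle₀⟩ := hPlancherel hfm hf hf2
    (by simpa using (memLp_two_iff_integrable_sq_norm hf2.1).1 hf2)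
  obtain ⟨hint₁, hle₁⟩ := hHardy hfm hf hf2
    (integrable_norm_rpow_mul_norm_sq_of_weighted hm hfm.aestronglyMeasurable hfw)
  simp only [neg_zero, Real.rpow_zero, one_mul] at hint₀ hle₀
  have hw₀ : ∫ x, ‖f x‖ ^ 2 ≤ 1 * weightedNorm m f ^ 2 := by
    simpa only [one_mul] using integral_mul_norm_sq_le_weightedNorm_sq (w := fun _ => 1) (b := 1)
      hfw (fun _ => zero_le_one) fun x _ => by
        rw [one_mul]
        exact Real.one_le_rpow (hone x) hm
  have hw₁ : ∫ x, ‖x‖ ^ m * ‖f x‖ ^ 2 ≤ 1 * weightedNorm m f ^ 2 :=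
    integral_mul_norm_sq_le_weightedNorm_sq hfw (fun x => by positivity) fun x _ => by
      rw [one_mul]
      gcongr
      exact Real.le_sqrt_of_sq_le (by linarith)
  simp only [add_mul, one_mul] at hw₀ hw₁ ⊢
  refine ⟨hint₀.add hint₁, ?_⟩
  rw [integral_add hint₀ hint₁]
  exact add_le_add (hle₀.trans (by gcongr)) (hle₁.trans (by gcongr))

theorem exists_norm_integral_mul_FT_mul_conj_FT_le (hm : 0 ≤ m) (hmn : m < n) :
    ∃ C > 0, ∀ {q f g : EuclideanSpace ℝ (Fin n) → ℂ} {K : ℝ}, 0 ≤ K →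
      (∀ ξ ≠ 0, ‖q ξ‖ ≤ K * (1 + ‖ξ‖ ^ (-m))) →
      Measurable f → Integrable f → MemLp (weighted m f) 2 →
      Measurable g → Integrable g → MemLp (weighted m g) 2 →
      ‖∫ ξ, q ξ * FT n f ξ * conj (FT n g ξ)‖ ≤ K * C * weightedNorm m f * weightedNorm m g := by
  obtain ⟨C, hC, hHardy⟩ := exists_integral_one_add_norm_rpow_neg_mul_norm_sq_FT_le hm hmn
  refine ⟨√C * √C, by positivity, fun {q f g K} hK hq hfm hf hfw hgm hg hgw => ?_⟩
  have hn : n ≠ 0 := by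
    rintro rfl
    norm_num at hmn
    linarith
  have : NeZero n := ⟨hn⟩
  obtain ⟨hintf, hlef⟩ := hHardy hfm hf hfw
  obtain ⟨hintg, hleg⟩ := hHardy hgm hg hgw
  have hsqrt {h : EuclideanSpace ℝ (Fin n) → ℂ}
      (hh : ∫ ξ, (1 + ‖ξ‖ ^ (-m)) * ‖FT n h ξ‖ ^ 2 ≤ C * weightedNorm m h ^ 2) :
      √(∫ ξ, (1 + ‖ξ‖ ^ (-m)) * ‖FT n h ξ‖ ^ 2) ≤ √C * weightedNorm m h := by
    rw [← Real.sqrt_sq (weightedNorm_nonneg (m := m) (f := h)), ← Real.sqrt_mul hC.le]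
    exact Real.sqrt_le_sqrt hh
  calc ‖∫ ξ, q ξ * FT n f ξ * conj (FT n g ξ)‖
      ≤ K * (√(∫ ξ, (1 + ‖ξ‖ ^ (-m)) * ‖FT n f ξ‖ ^ 2) *
          √(∫ ξ, (1 + ‖ξ‖ ^ (-m)) * ‖FT n g ξ‖ ^ 2)) := by
        refine norm_integral_le_of_norm_le_sqrt_mul_sqrt hintf hintg (fun ξ => by positivity)
          (fun ξ => by positivity) hK ?_
        filter_upwards [ae_norm_pos] with ξ hξ
        rw [norm_mul, norm_mul, RCLike.norm_conj, Real.sqrt_mul (by positivity),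
          Real.sqrt_mul (by positivity), Real.sqrt_sq (norm_nonneg _),
          Real.sqrt_sq (norm_nonneg _), mul_mul_mul_comm, Real.mul_self_sqrt (by positivity),
          ← mul_assoc, ← mul_assoc]
        gcongr
        exact hq ξ (norm_pos_iff.1 hξ)
    _ ≤ K * ((√C * weightedNorm m f) * (√C * weightedNorm m g)) := by
        have := weightedNorm_nonneg (m := m) (f := f)
        gcongr
        · exact hsqrt hlef
        · exact hsqrt hleg
    _ = K * (√C * √C) * weightedNorm m f * weightedNorm m g := by
        ring

end Regular

section Assembly

variable {n : ℕ} {a : EuclideanSpace ℝ (Fin n) → ℝ} {m : ℝ} {ζ : ℂ}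

theorem exists_schwartzMap_eq_weight_mul (s : ℝ) (f : SchwartzMap (EuclideanSpace ℝ (Fin n)) ℂ) :
    ∃ h : SchwartzMap (EuclideanSpace ℝ (Fin n)) ℂ,
      ∀ x, h x = ((√(1 + ‖x‖ ^ 2) ^ s : ℝ) : ℂ) * f x := by
  refine ⟨SchwartzMap.smulLeftCLM ℂ (fun x => (1 + ‖x‖ ^ 2) ^ (s / 2)) f, fun x => ?_⟩
  rw [SchwartzMap.smulLeftCLM_apply_apply
    (Function.hasTemperateGrowth_one_add_norm_sq_rpow _ (s / 2)),
    Real.rpow_div_two_eq_sqrt _ (by positivity), Complex.real_smul]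

theorem memLp_weighted_schwartzMap (m : ℝ) (f : SchwartzMap (EuclideanSpace ℝ (Fin n)) ℂ) :
    MemLp (weighted m f) 2 := by
  obtain ⟨h, hh⟩ := exists_schwartzMap_eq_weight_mul (m / 2) f
  have hweighted : weighted m f = h := funext fun x => (hh x).symm
  exact hweighted ▸ h.memLp 2

theorem integrable_resolventSymbol_mul_FT (ha : Continuous a) (hm : 1 ≤ m) (hζ : ζ.im ≠ 0)
    (f : SchwartzMap (EuclideanSpace ℝ (Fin n)) ℂ) :
    Integrable fun ξ => resolventSymbol a m ζ ξ * FT n f ξ := by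
  obtain ⟨h, hh⟩ := exists_schwartzMap_eq_weight_mul (m - 1) (𝓕 f)
  have hint : Integrable fun ξ : EuclideanSpace ℝ (Fin n) => h ((2 * π)⁻¹ • ξ) :=
    h.integrable.comp_smul (by positivity)
  refine (hint.norm.const_mul ((1 + 2 * π) ^ (m - 1) * |ζ.im|⁻¹ * (2 * π) ^ (-(n : ℝ) / 2))).mono'
    ((continuous_resolventSymbol ha (by linarith) hζ).mul
      (continuous_FT f.integrable)).aestronglyMeasurable (ae_of_all _ fun ξ => ?_)
  have hweight : √(1 + ‖ξ‖ ^ 2) ^ (m - 1) ≤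
      (1 + 2 * π) ^ (m - 1) * √(1 + ‖(2 * π)⁻¹ • ξ‖ ^ 2) ^ (m - 1) := by
    have := sqrt_one_add_mul_sq_rpow_le (k := 2 * π) (s := ‖(2 * π)⁻¹ • ξ‖) (p := m - 1)
      (by positivity) (by linarith)
    rwa [norm_smul, Real.norm_of_nonneg (by positivity), mul_inv_cancel_left₀ (by positivity),
      ← Real.norm_of_nonneg (by positivity : 0 ≤ (2 * π)⁻¹), ← norm_smul] at this
  have him : |ζ.im| ≤ ‖ζ - ((a ξ ^ m : ℝ) : ℂ)‖ := by
    simpa using Complex.abs_im_le_norm (ζ - ((a ξ ^ m : ℝ) : ℂ))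
  rw [resolventSymbol, hh, norm_mul, norm_mul, norm_mul, norm_inv, FT_eq_fourier, norm_smul,
    Complex.norm_real, Complex.norm_real, Real.norm_of_nonneg (by positivity),
    Real.norm_of_nonneg (by positivity), Real.norm_of_nonneg (by positivity),
    SchwartzMap.fourier_coe]
  calc √(1 + ‖ξ‖ ^ 2) ^ (m - 1) * ‖ζ - ((a ξ ^ m : ℝ) : ℂ)‖⁻¹ *
        ((2 * π) ^ (-(n : ℝ) / 2) * ‖𝓕 (f : EuclideanSpace ℝ (Fin n) → ℂ) ((2 * π)⁻¹ • ξ)‖)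
      ≤ ((1 + 2 * π) ^ (m - 1) * √(1 + ‖(2 * π)⁻¹ • ξ‖ ^ 2) ^ (m - 1)) * |ζ.im|⁻¹ *
        ((2 * π) ^ (-(n : ℝ) / 2) *
          ‖𝓕 (f : EuclideanSpace ℝ (Fin n) → ℂ) ((2 * π)⁻¹ • ξ)‖) := by
        gcongr
    _ = _ := by ring

theorem IsHomSymbol.norm_one_sub_cutoff_sq_mul_resolventSymbol_le (ha : IsHomSymbol a) {s K : ℝ}
    (hs : 0 < s) (hre : ζ.re = s ^ m) {ξ : EuclideanSpace ℝ (Fin n)} (hK : 0 ≤ K)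
    (hq : a ξ ^ m ≤ 3 * |ζ.re - a ξ ^ m| → ‖resolventSymbol a m ζ ξ‖ ≤ K) :
    ‖(1 - (cutoff a m s ξ : ℂ) ^ 2) * resolventSymbol a m ζ ξ‖ ≤ K := by
  by_cases hξ : cutoff a m s ξ = 1
  · simpa [hξ] using hK
  · have hcutoff : ‖1 - (cutoff a m s ξ : ℂ) ^ 2‖ ≤ 1 := by
      have hnonneg : 0 ≤ cutoff a m s ξ := bump.nonneg
      have hle_one : cutoff a m s ξ ≤ 1 := bump.le_one
      rw [← Complex.ofReal_one, ← Complex.ofReal_pow, ← Complex.ofReal_sub, Complex.norm_real,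
        Real.norm_of_nonneg (sub_nonneg.2 (pow_le_one₀ hnonneg hle_one))]
      linarith [sq_nonneg (cutoff a m s ξ)]
    rw [norm_mul]
    refine (mul_le_of_le_one_left (norm_nonneg _) hcutoff).trans (hq ?_)
    rw [hre]
    exact ha.rpow_le_of_cutoff_ne_one hs hξ

theorem IsHomSymbol.integral_resolventSymbol_eq_add (ha : IsHomSymbol a) (hm : 1 ≤ m) {s : ℝ}
    (hs : 0 < s) (hζ : ζ.im ≠ 0) {f g : EuclideanSpace ℝ (Fin n) → ℂ} (hf : Integrable f)
    (hg : Integrable g) (hint : Integrable fun ξ => resolventSymbol a m ζ ξ * FT n f ξ) :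
    ∫ ξ, resolventSymbol a m ζ ξ * FT n f ξ * conj (FT n g ξ)
      = (∫ ξ, (cutoff a m s ξ : ℂ) ^ 2 * resolventSymbol a m ζ ξ * FT n f ξ * conj (FT n g ξ)) +
        ∫ ξ, (1 - (cutoff a m s ξ : ℂ) ^ 2) * resolventSymbol a m ζ ξ * FT n f ξ *
          conj (FT n g ξ) := by
  have hfull : Integrable fun ξ => resolventSymbol a m ζ ξ * FT n f ξ * conj (FT n g ξ) :=
    hint.mul_bdd (c := ∫ x, ‖g x‖)
      (Complex.continuous_conj.comp (continuous_FT hg)).aestronglyMeasurable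
      (ae_of_all _ fun ξ => (RCLike.norm_conj _).trans_le (norm_FT_le hg ξ))
  have hnear : Integrable fun ξ =>
      (cutoff a m s ξ : ℂ) ^ 2 * resolventSymbol a m ζ ξ * FT n f ξ * conj (FT n g ξ) :=
    ha.integrable_cutoff_sq_mul hm hs hζ (continuous_FT hf) (continuous_FT hg)
  rw [← sub_eq_iff_eq_add', ← integral_sub hfull hnear]
  congr 1
  ext ξ
  ring

theorem IsHomSymbol.exists_norm_integral_resolventSymbol_mul_FT_le (ha : IsHomSymbol a)
    (hm : 1 < m) (hmn : m < n) :
    ∃ C > 0, ∀ {ζ : ℂ} {f g : EuclideanSpace ℝ (Fin n) → ℂ}, ζ.im ≠ 0 →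
      Measurable f → Integrable f → MemLp (weighted m f) 2 →
      Measurable g → Integrable g → MemLp (weighted m g) 2 →
      Integrable (fun ξ => resolventSymbol a m ζ ξ * FT n f ξ) →
      ‖∫ ξ, resolventSymbol a m ζ ξ * FT n f ξ * conj (FT n g ξ)‖
        ≤ C * weightedNorm m f * weightedNorm m g := by
  have hm0 : 0 < m := by linarith
  obtain ⟨C₁, hC₁, hnear⟩ := exists_norm_integral_cutoff_sq_mul_FT_le ha hm hmn
  obtain ⟨C₂, hC₂, hfar⟩ := exists_norm_integral_mul_FT_mul_conj_FT_le hm0.le hmn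
  obtain ⟨K, hK, hsymbol⟩ := ha.exists_norm_resolventSymbol_le hm0.le
  refine ⟨C₁ + K * C₂, by positivity, fun {ζ f g} hζ hfm hf hfw hgm hg hgw hint => ?_⟩
  have hNf := weightedNorm_nonneg (m := m) (f := f)
  have hNg := weightedNorm_nonneg (m := m) (f := g)
  rcases le_or_gt ζ.re 0 with hre | hre
  · refine (hfar hK.le (fun ξ hξ => hsymbol hξ ?_) hfm hf hfw hgm hg hgw).trans ?_
    · have := Real.rpow_nonneg (ha.nonneg ξ) m
      linarith [neg_abs_le (ζ.re - a ξ ^ m)]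
    · gcongr
      exact le_add_of_nonneg_left hC₁.le
  · have hs : 0 < ζ.re ^ m⁻¹ := by positivity
    rw [ha.integral_resolventSymbol_eq_add hm.le hs hζ hf hg hint, add_mul, add_mul]
    refine norm_add_le_of_le (hnear hζ hs hfm hf hfw hgm hg hgw)
      (hfar hK.le (fun ξ hξ => ?_) hfm hf hfw hgm hg hgw)
    exact ha.norm_one_sub_cutoff_sq_mul_resolventSymbol_le hs
      (Real.rpow_inv_rpow hre.le hm0.ne').symm (by positivity) (hsymbol hξ)

end Assembly

theorem resolvent_type_II_general {n : ℕ} {m : ℝ} (hm1 : 1 < m) (hmn : m < n)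
    {a : EuclideanSpace ℝ (Fin n) → ℝ} (ha : IsHomSymbol a) :
    ∃ C > 0, ∀ ζ : ℂ, ζ.im ≠ 0 → ∀ f g : SchwartzMap (EuclideanSpace ℝ (Fin n)) ℂ,
      ‖∫ x, mult n (resolventSymbol a m ζ) (fun y => f y) x * conj (g x)‖
        ≤ C * weightedNorm m f * weightedNorm m g := by
  obtain ⟨C, hC, hbound⟩ := ha.exists_norm_integral_resolventSymbol_mul_FT_le hm1 hmn
  refine ⟨C, hC, fun ζ hζ f g => ?_⟩
  have hint := integrable_resolventSymbol_mul_FT ha.continuous hm1.le hζ f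
  rw [integral_mult_mul_conj hint g.integrable]
  exact hbound hζ f.continuous.measurable f.integrable (memLp_weighted_schwartzMap m f)
    g.continuous.measurable g.integrable (memLp_weighted_schwartzMap m g) hint

theorem resolvent_type_II (n : ℕ) (hn : 2 ≤ n) (m : ℝ) (hm1 : 1 < m) (hmn : m < n)
    (a : EuclideanSpace ℝ (Fin n) → ℝ)
    (ha_cont : Continuous a)
    (ha_smooth : ContDiffOn ℝ (⊤ : ℕ∞) a {(0 : EuclideanSpace ℝ (Fin n))}ᶜ)
    (ha_hom : ∀ t : ℝ, 0 < t → ∀ ξ, a (t • ξ) = t * a ξ)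
    (ha_pos : ∀ ξ : EuclideanSpace ℝ (Fin n), ξ ≠ 0 → 0 < a ξ) :
    ∃ C > 0, ∀ ζ : ℂ, ζ.im ≠ 0 → ∀ f g : SchwartzMap (EuclideanSpace ℝ (Fin n)) ℂ,
      ‖∫ x : EuclideanSpace ℝ (Fin n),
          mult n (fun ξ => ((Real.sqrt (1 + ‖ξ‖ ^ 2) ^ (m - 1) : ℝ) : ℂ) *
              (ζ - ((a ξ ^ m : ℝ) : ℂ))⁻¹)
            (fun y => f y) x * (starRingEnd ℂ) (g x)‖
        ≤ C * (eLpNorm (fun x => ((Real.sqrt (1 + ‖x‖ ^ 2) ^ (m / 2) : ℝ) : ℂ) * f x) 2 volume).toReal *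
            (eLpNorm (fun x => ((Real.sqrt (1 + ‖x‖ ^ 2) ^ (m / 2) : ℝ) : ℂ) * g x) 2 volume).toReal := by
  exact resolvent_type_II_general hm1 hmn ⟨ha_cont, ha_hom, ha_pos⟩
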